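/- arXiv:2503.23336 — 10 statements merged into one kernel-verified Lean document; each statement's English description precedes it below -/
import Mathlib

section
/- Let 𝔙, 𝔥 ∈ ℝ. Define the vector fields v, h : ℝ² → ℝ² by v(x₁,x₂) = 𝔙·(−x₂, x₁) and h(x₁,x₂) = 𝔥·(−x₂, x₁), and the scalar function p : ℝ² → ℝ by p(x) = ((𝔙² − 𝔥²)/2)·(x₁² + x₂² − 1). Then: (i) div v = 0 and div h = 0 everywhere on ℝ²; (ii) (v·∇)v + ∇p = (h·∇)h everywhere on ℝ²; (iii) v(x)·x = 0 and h(x)·x = 0 for every x ∈ ℝ², so v and h are tangential to every circle centered at the origin; (iv) p(x) = 0 whenever ‖x‖ = 1; and (v) for every x with ‖x‖ = 1, the outward normal derivative ∇p(x)·x equals 𝔙² − 𝔥². In particular (v, h, p) is a stationary solution of the ideal incompressible MHD equations on the unit disk with zero pressure on the boundary, and the Rayleigh–Taylor quantity −∇_n p on the unit circle equals 𝔥² − 𝔙² (the Rayleigh–Taylor sign condition holds iff 𝔥² > 𝔙²). -/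
/-- First partial derivative of a scalar function on `ℝ²`. -/
noncomputable def pd1 (f : ℝ × ℝ → ℝ) (x : ℝ × ℝ) : ℝ := fderiv ℝ f x (1, 0)

/-- Second partial derivative of a scalar function on `ℝ²`. -/
noncomputable def pd2 (f : ℝ × ℝ → ℝ) (x : ℝ × ℝ) : ℝ := fderiv ℝ f x (0, 1)

/-!
A rigid rotation is a linear field `ω J` with `J ^ 2 = -1`, so its self-advection is the centripetal
field `-ω² x`. The accelerations of two rotations therefore differ by a multiple of `x`, which is
the gradient of a quadratic radial pressure.
-/

/-- The divergence `∂₁w₁ + ∂₂w₂` of a planar vector field. -/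
noncomputable def divergence (w : ℝ × ℝ → ℝ × ℝ) (x : ℝ × ℝ) : ℝ :=
  pd1 (fun y => (w y).1) x + pd2 (fun y => (w y).2) x

/-- The advection term `(u·∇)w`, which transports the planar vector field `w` along `u`. -/
noncomputable def advection (u w : ℝ × ℝ → ℝ × ℝ) (x : ℝ × ℝ) : ℝ × ℝ :=
  ((u x).1 * pd1 (fun y => (w y).1) x + (u x).2 * pd2 (fun y => (w y).1) x,
    (u x).1 * pd1 (fun y => (w y).2) x + (u x).2 * pd2 (fun y => (w y).2) x)

/-- The gradient of a scalar function on `ℝ²`, written in coordinates because the norm of `ℝ × ℝ`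
is not Euclidean and Mathlib's `gradient` does not apply. -/
noncomputable def grad (f : ℝ × ℝ → ℝ) (x : ℝ × ℝ) : ℝ × ℝ :=
  (pd1 f x, pd2 f x)

theorem mul_pd1_add_mul_pd2 (f : ℝ × ℝ → ℝ) (x u : ℝ × ℝ) :
    u.1 * pd1 f x + u.2 * pd2 f x = fderiv ℝ f x u := by
  have hu : u = u.1 • ((1, 0) : ℝ × ℝ) + u.2 • (0, 1) := by ext <;> simp
  conv_rhs => rw [hu, map_add, map_smul, map_smul]
  rfl

theorem divergence_of_hasFDerivAt {w : ℝ × ℝ → ℝ × ℝ} {A : ℝ × ℝ →L[ℝ] ℝ × ℝ} {x : ℝ × ℝ}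
    (hw : HasFDerivAt w A x) : divergence w x = (A (1, 0)).1 + (A (0, 1)).2 := by
  simp [divergence, pd1, pd2, hw.fst.fderiv, hw.snd.fderiv]

theorem advection_of_hasFDerivAt (u : ℝ × ℝ → ℝ × ℝ) {w : ℝ × ℝ → ℝ × ℝ}
    {A : ℝ × ℝ →L[ℝ] ℝ × ℝ} {x : ℝ × ℝ} (hw : HasFDerivAt w A x) :
    advection u w x = A (u x) := by
  simp [advection, mul_pd1_add_mul_pd2, hw.fst.fderiv, hw.snd.fderiv]

theorem grad_radial {φ : ℝ → ℝ} {φ' : ℝ} {x : ℝ × ℝ}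
    (hφ : HasDerivAt φ φ' (x.1 ^ 2 + x.2 ^ 2)) :
    grad (fun y => φ (y.1 ^ 2 + y.2 ^ 2)) x = (2 * φ') • x := by
  have hfst : HasFDerivAt (Prod.fst : ℝ × ℝ → ℝ) (.fst ℝ ℝ ℝ) x := hasFDerivAt_fst
  have hsnd : HasFDerivAt (Prod.snd : ℝ × ℝ → ℝ) (.snd ℝ ℝ ℝ) x := hasFDerivAt_snd
  have hsq : HasFDerivAt (fun y : ℝ × ℝ => y.1 ^ 2 + y.2 ^ 2) _ x :=
    (hfst.pow 2).fun_add (hsnd.pow 2)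
  have hradial : HasFDerivAt (fun y : ℝ × ℝ => φ (y.1 ^ 2 + y.2 ^ 2)) _ x :=
    hφ.comp_hasFDerivAt x hsq
  ext <;> simp [grad, pd1, pd2, hradial.fderiv] <;> ring

theorem grad_const_mul_sq_add_sq_sub (c d : ℝ) (x : ℝ × ℝ) :
    grad (fun y => c * (y.1 ^ 2 + y.2 ^ 2 - d)) x = (2 * c) • x := by
  have hφ : HasDerivAt (fun s : ℝ => c * (s - d)) c (x.1 ^ 2 + x.2 ^ 2) := by
    simpa using ((hasDerivAt_id _).sub_const d).const_mul c
  exact grad_radial hφ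

/-- The velocity field of the rigid counterclockwise rotation of the plane about the origin with
angular velocity `ω`, bundled as a continuous linear map so that it is its own derivative. -/
noncomputable def rotationField (ω : ℝ) : ℝ × ℝ →L[ℝ] ℝ × ℝ :=
  (-(ω • ContinuousLinearMap.snd ℝ ℝ ℝ)).prod (ω • ContinuousLinearMap.fst ℝ ℝ ℝ)

theorem rotationField_apply (ω : ℝ) (x : ℝ × ℝ) :
    rotationField ω x = (-(ω * x.2), ω * x.1) := rfl

theorem rotationField_rotationField (ω ω' : ℝ) (x : ℝ × ℝ) :
    rotationField ω (rotationField ω' x) = -(ω * ω') • x := by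
  ext <;> simp only [rotationField_apply, Prod.smul_fst, Prod.smul_snd, smul_eq_mul] <;> ring

theorem rotationField_dot_self (ω : ℝ) (x : ℝ × ℝ) :
    (rotationField ω x).1 * x.1 + (rotationField ω x).2 * x.2 = 0 := by
  simp only [rotationField_apply]
  ring

theorem divergence_rotationField (ω : ℝ) (x : ℝ × ℝ) : divergence (rotationField ω) x = 0 := by
  simp [divergence_of_hasFDerivAt (rotationField ω).hasFDerivAt, rotationField_apply]

theorem advection_rotationField (ω ω' : ℝ) (x : ℝ × ℝ) :
    advection (rotationField ω') (rotationField ω) x = -(ω * ω') • x := by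
  rw [advection_of_hasFDerivAt _ (rotationField ω).hasFDerivAt, rotationField_rotationField]

theorem advection_add_grad_eq_advection {𝔙 𝔥 : ℝ} {p : ℝ × ℝ → ℝ} {x : ℝ × ℝ}
    (hp : grad p x = (𝔙 ^ 2 - 𝔥 ^ 2) • x) :
    advection (rotationField 𝔙) (rotationField 𝔙) x + grad p x =
      advection (rotationField 𝔥) (rotationField 𝔥) x := by
  rw [advection_rotationField, advection_rotationField, hp]
  module

theorem grad_dot_self_of_grad_eq_smul {p : ℝ × ℝ → ℝ} {c : ℝ} {x : ℝ × ℝ}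
    (hp : grad p x = c • x) :
    pd1 p x * x.1 + pd2 p x * x.2 = c * (x.1 ^ 2 + x.2 ^ 2) := by
  have hp₁ : pd1 p x = c * x.1 := congrArg Prod.fst hp
  have hp₂ : pd2 p x = c * x.2 := congrArg Prod.snd hp
  rw [hp₁, hp₂]
  ring

/-- The circular flow `v = 𝔙·(−x₂, x₁)`, magnetic field `h = 𝔥·(−x₂, x₁)`, and effective
pressure `p = ((𝔙² − 𝔥²)/2)(x₁² + x₂² − 1)` form a stationary solution of the ideal
incompressible MHD equations on the unit disk: both fields are divergence free,
`(v·∇)v + ∇p = (h·∇)h`, both fields are tangential to every circle centered at the origin,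
`p` vanishes on the unit circle, and the outward normal derivative `∇p·x` on the unit circle
equals `𝔙² − 𝔥²`. -/
theorem stationary_circular_MHD_solution (𝔙 𝔥 : ℝ)
    (v h : ℝ × ℝ → ℝ × ℝ) (p : ℝ × ℝ → ℝ)
    (hv : ∀ x, v x = (-(𝔙 * x.2), 𝔙 * x.1))
    (hh : ∀ x, h x = (-(𝔥 * x.2), 𝔥 * x.1))
    (hp : ∀ x, p x = ((𝔙 ^ 2 - 𝔥 ^ 2) / 2) * (x.1 ^ 2 + x.2 ^ 2 - 1)) :
    -- (i) div v = 0 and div h = 0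
    (∀ x, pd1 (fun y => (v y).1) x + pd2 (fun y => (v y).2) x = 0) ∧
    (∀ x, pd1 (fun y => (h y).1) x + pd2 (fun y => (h y).2) x = 0) ∧
    -- (ii) (v·∇)v + ∇p = (h·∇)h, componentwise
    (∀ x, (v x).1 * pd1 (fun y => (v y).1) x + (v x).2 * pd2 (fun y => (v y).1) x + pd1 p x
        = (h x).1 * pd1 (fun y => (h y).1) x + (h x).2 * pd2 (fun y => (h y).1) x) ∧
    (∀ x, (v x).1 * pd1 (fun y => (v y).2) x + (v x).2 * pd2 (fun y => (v y).2) x + pd2 p x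
        = (h x).1 * pd1 (fun y => (h y).2) x + (h x).2 * pd2 (fun y => (h y).2) x) ∧
    -- (iii) v and h are tangential to circles centered at the origin
    (∀ x : ℝ × ℝ, (v x).1 * x.1 + (v x).2 * x.2 = 0) ∧
    (∀ x : ℝ × ℝ, (h x).1 * x.1 + (h x).2 * x.2 = 0) ∧
    -- (iv) p vanishes on the unit circle
    (∀ x : ℝ × ℝ, x.1 ^ 2 + x.2 ^ 2 = 1 → p x = 0) ∧
    -- (v) the outward normal derivative of p on the unit circle equals 𝔙² − 𝔥²
    (∀ x : ℝ × ℝ, x.1 ^ 2 + x.2 ^ 2 = 1 →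
      pd1 p x * x.1 + pd2 p x * x.2 = 𝔙 ^ 2 - 𝔥 ^ 2) := by
  obtain rfl : v = rotationField 𝔙 := funext hv
  obtain rfl : h = rotationField 𝔥 := funext hh
  have hgrad (x : ℝ × ℝ) : grad p x = (𝔙 ^ 2 - 𝔥 ^ 2) • x := by
    rw [funext hp, grad_const_mul_sq_add_sq_sub, mul_div_cancel₀ _ two_ne_zero]
  have hmomentum (x : ℝ × ℝ) :
      advection (rotationField 𝔙) (rotationField 𝔙) x + grad p x =
        advection (rotationField 𝔥) (rotationField 𝔥) x :=
    advection_add_grad_eq_advection (hgrad x)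
  exact ⟨divergence_rotationField 𝔙, divergence_rotationField 𝔥,
    fun x => congrArg Prod.fst (hmomentum x), fun x => congrArg Prod.snd (hmomentum x),
    rotationField_dot_self 𝔙, rotationField_dot_self 𝔥,
    fun x hx => by rw [hp, hx, sub_self, mul_zero],
    fun x hx => by rw [grad_dot_self_of_grad_eq_smul (hgrad x), hx, mul_one]⟩
end

section
/- Let α, 𝔥, 𝔙 ∈ ℝ with α ≥ 0, and let k ∈ ℝ with k > 1. Consider the dispersion relation (k : ℂ)·(c − ((k−1)/k)·𝔙)² = ((k−1) : ℂ)·(α(k+1) + 𝔥² − 𝔙²/k) for c ∈ ℂ. Then every complex solution c of this equation is real if and only if α(k+1) + 𝔥² ≥ 𝔙²/k; equivalently, there exists a solution c with nonzero imaginary part (an unstable k-wave) if and only if α(k+1) + 𝔥² < 𝔙²/k. -/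
/-!
Divided by `k`, the dispersion relation equates the square of `c - a`, with `a` real, to a real
number of the same sign as `α(k+1) + 𝔥² − 𝔙²/k`, because `(k-1)/k > 0`. A complex number is real
exactly when its square is a nonnegative real, so this sign decides the reality of every root in the
same way. Since `ℂ` is algebraically closed, a root exists, so the two cases exclude each other.
-/

theorem exists_mul_sub_pow_eq {K : Type*} [Field K] [IsAlgClosed K] {k : K} (hk : k ≠ 0) (a b : K)
    {n : ℕ} (hn : 0 < n) : ∃ c : K, k * (c - a) ^ n = b := by
  obtain ⟨z, hz⟩ := IsAlgClosed.exists_pow_nat_eq (b / k) hn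
  exact ⟨z + a, by rw [add_sub_cancel_right, hz, mul_div_cancel₀ b hk]⟩

open scoped ComplexOrder in
theorem im_eq_zero_iff_of_sq_sub_ofReal_eq {c : ℂ} {a d : ℝ} (hc : (c - a) ^ 2 = d) :
    c.im = 0 ↔ 0 ≤ d := by
  calc c.im = 0 ↔ (c - a).im = 0 := by simp
    _ ↔ 0 ≤ (c - a) ^ 2 := Complex.sq_nonneg_iff.symm
    _ ↔ 0 ≤ d := by rw [hc, Complex.zero_le_real]

theorem im_eq_zero_iff_of_mul_sq_sub_ofReal_eq {k m a d : ℝ} {c : ℂ} (hkm : 0 < k * m)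
    (hc : (k : ℂ) * (c - a) ^ 2 = m * d) : c.im = 0 ↔ 0 ≤ d := by
  have hk : (k : ℂ) ≠ 0 := Complex.ofReal_ne_zero.mpr (left_ne_zero_of_mul hkm.ne')
  have hsq : (c - a) ^ 2 = ((m / k * d : ℝ) : ℂ) := by
    push_cast
    rw [div_mul_eq_mul_div, eq_div_iff hk, mul_comm, hc]
  have hratio : 0 < m / k := div_pos_iff.mpr (mul_pos_iff.mp (mul_comm k m ▸ hkm))
  rw [im_eq_zero_iff_of_sq_sub_ofReal_eq hsq, mul_nonneg_iff_of_pos_left hratio]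

theorem forall_mul_sq_sub_ofReal_eq_imp_im_eq_zero_iff {k m : ℝ} (hkm : 0 < k * m) (a d : ℝ) :
    (∀ c : ℂ, (k : ℂ) * (c - a) ^ 2 = m * d → c.im = 0) ↔ 0 ≤ d := by
  refine ⟨fun h => ?_, fun hd c hc => (im_eq_zero_iff_of_mul_sq_sub_ofReal_eq hkm hc).mpr hd⟩
  have hk : (k : ℂ) ≠ 0 := Complex.ofReal_ne_zero.mpr (left_ne_zero_of_mul hkm.ne')
  obtain ⟨c, hc⟩ := exists_mul_sub_pow_eq hk (a : ℂ) (m * d) two_pos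
  exact (im_eq_zero_iff_of_mul_sq_sub_ofReal_eq hkm hc).mp (h c hc)

theorem dispersion_stability_criterion_general (α 𝔥 𝔙 k : ℝ) (hk : k < 0 ∨ 1 < k) :
    ((∀ c : ℂ,
        (k : ℂ) * (c - (((k - 1) / k * 𝔙 : ℝ) : ℂ)) ^ 2
          = ((k - 1 : ℝ) : ℂ) * ((α * (k + 1) + 𝔥 ^ 2 - 𝔙 ^ 2 / k : ℝ) : ℂ) →
        c.im = 0) ↔ 𝔙 ^ 2 / k ≤ α * (k + 1) + 𝔥 ^ 2) ∧
    ((∃ c : ℂ,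
        (k : ℂ) * (c - (((k - 1) / k * 𝔙 : ℝ) : ℂ)) ^ 2
          = ((k - 1 : ℝ) : ℂ) * ((α * (k + 1) + 𝔥 ^ 2 - 𝔙 ^ 2 / k : ℝ) : ℂ) ∧
        c.im ≠ 0) ↔ α * (k + 1) + 𝔥 ^ 2 < 𝔙 ^ 2 / k) := by
  have hkm : 0 < k * (k - 1) := by rcases hk with hk | hk <;> nlinarith
  have all_real_iff := forall_mul_sq_sub_ofReal_eq_imp_im_eq_zero_iff hkm ((k - 1) / k * 𝔙)
    (α * (k + 1) + 𝔥 ^ 2 - 𝔙 ^ 2 / k)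
  rw [sub_nonneg] at all_real_iff
  refine ⟨all_real_iff, ?_⟩
  rw [← not_le, ← all_real_iff]
  simp only [not_forall, exists_prop, ne_eq]

/-- Stability criterion from the dispersion relation
`k(c − ((k−1)/k)𝔙)² = (k−1)(α(k+1) + 𝔥² − 𝔙²/k)` for a `k`-wave (`k > 1`, `α ≥ 0`):
every complex root `c` is real iff `α(k+1) + 𝔥² ≥ 𝔙²/k`, and there is a root with nonzero
imaginary part (an unstable wave) iff `α(k+1) + 𝔥² < 𝔙²/k`. -/
theorem dispersion_stability_criterion (α 𝔥 𝔙 k : ℝ) (hα : 0 ≤ α) (hk : 1 < k) :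
    ((∀ c : ℂ,
        (k : ℂ) * (c - (((k - 1) / k * 𝔙 : ℝ) : ℂ)) ^ 2
          = ((k - 1 : ℝ) : ℂ) * ((α * (k + 1) + 𝔥 ^ 2 - 𝔙 ^ 2 / k : ℝ) : ℂ) →
        c.im = 0) ↔ 𝔙 ^ 2 / k ≤ α * (k + 1) + 𝔥 ^ 2) ∧
    ((∃ c : ℂ,
        (k : ℂ) * (c - (((k - 1) / k * 𝔙 : ℝ) : ℂ)) ^ 2
          = ((k - 1 : ℝ) : ℂ) * ((α * (k + 1) + 𝔥 ^ 2 - 𝔙 ^ 2 / k : ℝ) : ℂ) ∧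
        c.im ≠ 0) ↔ α * (k + 1) + 𝔥 ^ 2 < 𝔙 ^ 2 / k) :=
  dispersion_stability_criterion_general α 𝔥 𝔙 k (.inr hk)
end

section
/- Let 𝔙 ∈ ℝ with 𝔙 ≠ 0 and let k ∈ ℝ with k > 1. Then the set of complex numbers c satisfying (k : ℂ)·(c − ((k−1)/k)·𝔙)² = −((k−1) : ℂ)·𝔙²/k is exactly { ((k−1)/k)𝔙 + i·(√(k−1)/k)·𝔙 , ((k−1)/k)𝔙 − i·(√(k−1)/k)·𝔙 }, and every element of this set has nonzero imaginary part. In other words, for the free-boundary problem with zero surface tension and zero magnetic field, every perturbing wave with wave number k > 1 is unstable. -/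
theorem setOf_mul_sub_sq_eq_neg_mul_sq {R : Type*} [CommRing R] [NoZeroDivisors R] {i κ : R}
    (hi : i ^ 2 = -1) (hκ : κ ≠ 0) (u w : R) :
    {z : R | κ * (z - u) ^ 2 = -(κ * w ^ 2)} = {u + i * w, u - i * w} := by
  have neg_sq_eq : -w ^ 2 = (i * w) ^ 2 := by rw [mul_pow, hi, neg_one_mul]
  ext z
  rw [Set.mem_ofPred_eq, Set.mem_insert_iff, Set.mem_singleton_iff, ← mul_neg,
    mul_right_inj' hκ, neg_sq_eq, sq_eq_sq_iff_eq_or_eq_neg, sub_eq_iff_eq_add',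
    sub_eq_iff_eq_add', ← sub_eq_add_neg]

theorem im_ne_zero_of_mul_sub_sq_eq_neg {κ a d : ℝ} (hκ : 0 ≤ κ) (hd : 0 < d) {z : ℂ}
    (hz : (κ : ℂ) * (z - a) ^ 2 = -(d : ℂ)) : z.im ≠ 0 := by
  intro him
  lift z to ℝ using him
  have hz_real : κ * (z - a) ^ 2 = -d := by exact_mod_cast hz
  have hsq_nonneg : 0 ≤ κ * (z - a) ^ 2 := by positivity
  linarith

theorem mul_sqrt_div_mul_sq {s k : ℝ} (hs : 0 ≤ s) (hk : k ≠ 0) (v : ℝ) :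
    k * (√s / k * v) ^ 2 = s * v ^ 2 / k := by
  rw [mul_pow, div_pow, Real.sq_sqrt hs]
  field_simp

/-- Rayleigh–Taylor instability for rotating flows without surface tension and without
magnetic field: for `𝔙 ≠ 0` and `k > 1`, the roots of the dispersion relation
`k(c − ((k−1)/k)𝔙)² = −(k−1)𝔙²/k` are exactly `((k−1)/k)𝔙 ± i(√(k−1)/k)𝔙`, and each of
them has nonzero imaginary part: every perturbing `k`-wave with `k > 1` is unstable. -/
theorem rayleigh_taylor_all_waves_unstable (𝔙 k : ℝ) (h𝔙 : 𝔙 ≠ 0) (hk : 1 < k) :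
    ({c : ℂ |
        (k : ℂ) * (c - (((k - 1) / k * 𝔙 : ℝ) : ℂ)) ^ 2
          = -(((k - 1) * 𝔙 ^ 2 / k : ℝ) : ℂ)} : Set ℂ)
      = {(((k - 1) / k * 𝔙 : ℝ) : ℂ) + Complex.I * ((Real.sqrt (k - 1) / k * 𝔙 : ℝ) : ℂ),
         (((k - 1) / k * 𝔙 : ℝ) : ℂ) - Complex.I * ((Real.sqrt (k - 1) / k * 𝔙 : ℝ) : ℂ)} ∧
    (∀ c : ℂ,
      (k : ℂ) * (c - (((k - 1) / k * 𝔙 : ℝ) : ℂ)) ^ 2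
        = -(((k - 1) * 𝔙 ^ 2 / k : ℝ) : ℂ) → c.im ≠ 0) := by
  have hk_pos : 0 < k := one_pos.trans hk
  have hk_sub : 0 < k - 1 := sub_pos.mpr hk
  constructor
  · rw [← mul_sqrt_div_mul_sq hk_sub.le hk_pos.ne' 𝔙, Complex.ofReal_mul k, Complex.ofReal_pow]
    exact setOf_mul_sub_sq_eq_neg_mul_sq Complex.I_sq (Complex.ofReal_ne_zero.mpr hk_pos.ne') _ _
  · have hd : 0 < (k - 1) * 𝔙 ^ 2 / k := by positivity
    exact fun c hc => im_ne_zero_of_mul_sub_sq_eq_neg hk_pos.le hd hc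
end

section
/- Let 𝔙, 𝔥 ∈ ℝ with 𝔥 ≠ 0, and set α = 0. Then for every real k with k > 1 and k·𝔥² ≥ 𝔙², every complex number c satisfying (k : ℂ)·(c − ((k−1)/k)·𝔙)² = ((k−1) : ℂ)·(𝔥² − 𝔙²/k) is real. In particular, all perturbing waves with wave numbers k ≥ max(1, 𝔙²/𝔥²) are stable: a non-degenerate tangential magnetic field, no matter how small, stabilizes all sufficiently large interfacial waves even without surface tension. -/
section

open scoped ComplexOrder

theorem ofReal_mul_sub_ofReal_sq_nonneg_iff {a b : ℝ} {z : ℂ} (ha : 0 < a) :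
    0 ≤ (a : ℂ) * (z - b) ^ 2 ↔ z.im = 0 := by
  rw [← Complex.real_smul, smul_nonneg_iff_nonneg_of_pos_left ha, Complex.sq_nonneg_iff,
    Complex.sub_im, Complex.ofReal_im, sub_zero]

theorem magnetic_field_stabilizes_large_waves_general {α 𝔥 𝔙 k : ℝ} {c : ℂ} (hk : 1 < k)
    (hc : (k : ℂ) * (c - (((k - 1) / k * 𝔙 : ℝ) : ℂ)) ^ 2
      = ((k - 1 : ℝ) : ℂ) * ((α * (k + 1) + 𝔥 ^ 2 - 𝔙 ^ 2 / k : ℝ) : ℂ)) :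
    c.im = 0 ↔ 𝔙 ^ 2 ≤ k * (α * (k + 1) + 𝔥 ^ 2) := by
  have hk_pos : 0 < k := one_pos.trans hk
  calc c.im = 0
      ↔ 0 ≤ (k : ℂ) * (c - (((k - 1) / k * 𝔙 : ℝ) : ℂ)) ^ 2 :=
        (ofReal_mul_sub_ofReal_sq_nonneg_iff hk_pos).symm
    _ ↔ 0 ≤ (k - 1) * (α * (k + 1) + 𝔥 ^ 2 - 𝔙 ^ 2 / k) := by
        rw [hc, ← Complex.ofReal_mul, Complex.zero_le_real]
    _ ↔ 𝔙 ^ 2 / k ≤ α * (k + 1) + 𝔥 ^ 2 := by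
        rw [mul_nonneg_iff_of_pos_left (sub_pos.mpr hk), sub_nonneg]
    _ ↔ 𝔙 ^ 2 ≤ k * (α * (k + 1) + 𝔥 ^ 2) := div_le_iff₀' hk_pos

end

/-- Stabilization by a non-degenerate tangential magnetic field without surface tension
(`α = 0`): if `𝔥 ≠ 0`, then for every wave number `k > 1` with `k𝔥² ≥ 𝔙²`, every root `c` of
the dispersion relation `k(c − ((k−1)/k)𝔙)² = (k−1)(𝔥² − 𝔙²/k)` is real, i.e. all
sufficiently large interfacial waves are stable. -/
theorem magnetic_field_stabilizes_large_waves (𝔙 𝔥 : ℝ) (h𝔥 : 𝔥 ≠ 0) :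
    ∀ k : ℝ, 1 < k → 𝔙 ^ 2 ≤ k * 𝔥 ^ 2 →
      ∀ c : ℂ,
        (k : ℂ) * (c - (((k - 1) / k * 𝔙 : ℝ) : ℂ)) ^ 2
          = ((k - 1 : ℝ) : ℂ) * ((𝔥 ^ 2 - 𝔙 ^ 2 / k : ℝ) : ℂ) →
        c.im = 0 := by
  intro k hk h𝔙 c hc
  exact (magnetic_field_stabilizes_large_waves_general (α := 0) (𝔥 := 𝔥) hk
    (by simpa only [zero_mul, zero_add] using hc)).mpr
    (by simpa only [zero_mul, zero_add] using h𝔙)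
end

section
/- Let α, 𝔥, 𝔙 ∈ ℝ with α > 0. Then for every real k with k > 1 and α·k ≥ 𝔙², every complex number c satisfying (k : ℂ)·(c − ((k−1)/k)·𝔙)² = ((k−1) : ℂ)·(α(k+1) + 𝔥² − 𝔙²/k) is real. In particular, in the presence of surface tension all perturbing waves with sufficiently large wave numbers are stable, regardless of the magnetic field strength 𝔥. -/
/-!
A complex number is real exactly when its square is a nonnegative real. The dispersion relation
makes the square of `c - ((k - 1) / k) 𝔙` real, so stability for `k > 1` means that
`α (k + 1) + 𝔥² - 𝔙² / k` is nonnegative. Surface tension guarantees this as soon as `𝔙² ≤ α k`,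
and the magnetic term `𝔥²` only helps.
-/

open ComplexOrder in
theorem im_eq_zero_iff_div_nonneg_of_mul_sub_sq_eq {k a r : ℝ} {c : ℂ} (hk : k ≠ 0)
    (hc : (k : ℂ) * (c - a) ^ 2 = r) : c.im = 0 ↔ 0 ≤ r / k := by
  have hsq : (c - a) ^ 2 = ((r / k : ℝ) : ℂ) := by
    rw [Complex.ofReal_div, eq_div_iff (Complex.ofReal_ne_zero.2 hk), mul_comm, hc]
  rw [← Complex.zero_le_real, ← hsq, Complex.sq_nonneg_iff, Complex.sub_im, Complex.ofReal_im,
    sub_zero]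

theorem surface_tension_stabilizes_large_waves_general {α 𝔥 𝔙 k : ℝ} (hk : 1 < k) {c : ℂ}
    (hc : (k : ℂ) * (c - (((k - 1) / k * 𝔙 : ℝ) : ℂ)) ^ 2
      = ((k - 1 : ℝ) : ℂ) * ((α * (k + 1) + 𝔥 ^ 2 - 𝔙 ^ 2 / k : ℝ) : ℂ)) :
    c.im = 0 ↔ 𝔙 ^ 2 ≤ (α * (k + 1) + 𝔥 ^ 2) * k := by
  have hk₀ : 0 < k := one_pos.trans hk
  rw [← Complex.ofReal_mul] at hc
  calc
    c.im = 0 ↔ 0 ≤ (k - 1) * (α * (k + 1) + 𝔥 ^ 2 - 𝔙 ^ 2 / k) / k :=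
      im_eq_zero_iff_div_nonneg_of_mul_sub_sq_eq hk₀.ne' hc
    _ ↔ 0 ≤ α * (k + 1) + 𝔥 ^ 2 - 𝔙 ^ 2 / k := by
      rw [le_div_iff₀ hk₀, zero_mul, mul_nonneg_iff_of_pos_left (sub_pos.2 hk)]
    _ ↔ 𝔙 ^ 2 ≤ (α * (k + 1) + 𝔥 ^ 2) * k := by rw [sub_nonneg, div_le_iff₀ hk₀]

/-- Stabilization by surface tension: if `α > 0`, then for every wave number `k > 1` with
`αk ≥ 𝔙²`, every root `c` of the dispersion relation
`k(c − ((k−1)/k)𝔙)² = (k−1)(α(k+1) + 𝔥² − 𝔙²/k)` is real, i.e. in the presence of surface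
tension all perturbing waves with sufficiently large wave numbers are stable, regardless of
the magnetic field strength `𝔥`. -/
theorem surface_tension_stabilizes_large_waves (α 𝔥 𝔙 : ℝ) (hα : 0 < α) :
    ∀ k : ℝ, 1 < k → 𝔙 ^ 2 ≤ α * k →
      ∀ c : ℂ,
        (k : ℂ) * (c - (((k - 1) / k * 𝔙 : ℝ) : ℂ)) ^ 2
          = ((k - 1 : ℝ) : ℂ) * ((α * (k + 1) + 𝔥 ^ 2 - 𝔙 ^ 2 / k : ℝ) : ℂ) →
        c.im = 0 := by
  intro k hk hV c hc
  have hα_le : α ≤ α * (k + 1) + 𝔥 ^ 2 := by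
    linarith [mul_pos hα (one_pos.trans hk), sq_nonneg 𝔥]
  exact (surface_tension_stabilizes_large_waves_general hk hc).2 <|
    hV.trans (mul_le_mul_of_nonneg_right hα_le (one_pos.trans hk).le)
end

section
/- Let γ : ℝ × ℝ → ℝ² be a smooth family of regular plane curves with speed σ(t,s) := ‖∂_s γ(t,s)‖ > 0, unit tangent τ := σ⁻¹∂_sγ, unit normal n := (τ², −τ¹), and evolution velocity u := ∂_t γ. Then for all (t,s): ∂_t τ(t,s) = ( (σ⁻¹∂_s u)(t,s) · n(t,s) ) · n(t,s). -/
/-- Dot product on `ℝ²`. -/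
def dotp (a b : ℝ × ℝ) : ℝ := a.1 * b.1 + a.2 * b.2

/-- Partial derivative in the time variable of an `ℝ²`-valued function of `(t,s)`. -/
noncomputable def ptd (f : ℝ × ℝ → ℝ × ℝ) (q : ℝ × ℝ) : ℝ × ℝ :=
  deriv (fun t => f (t, q.2)) q.1

/-- Partial derivative in the parameter variable of an `ℝ²`-valued function of `(t,s)`. -/
noncomputable def psd (f : ℝ × ℝ → ℝ × ℝ) (q : ℝ × ℝ) : ℝ × ℝ :=
  deriv (fun s => f (q.1, s)) q.2

/-!
In any inner product space the time derivative of a normalized vector `v / ‖v‖` is the component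
of `v' / ‖v‖` orthogonal to `v`. For `v = ∂_s γ` symmetry of second derivatives gives
`v' = ∂_s u`, and in the plane the orthogonal complement of `τ` is spanned by `n`.
-/

open scoped RealInnerProductSpace Topology

section MixedPartials

variable {𝕜 E F : Type*} [NontriviallyNormedField 𝕜] [NormedAddCommGroup E] [NormedSpace 𝕜 E]
  [NormedAddCommGroup F] [NormedSpace 𝕜 F]

theorem deriv_comp_prodMk_left {f : 𝕜 × E → F} {x : 𝕜} {y : E}
    (hf : DifferentiableAt 𝕜 f (x, y)) :
    deriv (fun z => f (z, y)) x = fderiv 𝕜 f (x, y) (1, 0) :=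
  (hf.hasFDerivAt.comp_hasDerivAt x ((hasDerivAt_id x).prodMk (hasDerivAt_const x y))).deriv

theorem deriv_comp_prodMk_right {f : E × 𝕜 → F} {x : E} {y : 𝕜}
    (hf : DifferentiableAt 𝕜 f (x, y)) :
    deriv (fun z => f (x, z)) y = fderiv 𝕜 f (x, y) (0, 1) :=
  (hf.hasFDerivAt.comp_hasDerivAt y ((hasDerivAt_const y x).prodMk (hasDerivAt_id y))).deriv

theorem hasDerivAt_fderiv_comp_apply {f : E → F} {c : 𝕜 → E} {c' : E} {x : 𝕜}
    (hf : DifferentiableAt 𝕜 (fderiv 𝕜 f) (c x)) (hc : HasDerivAt c c' x) (v : E) :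
    HasDerivAt (fun y => fderiv 𝕜 f (c y) v) (fderiv 𝕜 (fderiv 𝕜 f) (c x) c' v) x := by
  simpa using (hf.hasFDerivAt.comp_hasDerivAt x hc).clm_apply (hasDerivAt_const x v)

theorem hasDerivAt_deriv_partial_comm {f : 𝕜 × 𝕜 → F} {x y : 𝕜}
    (hf : ContDiffAt 𝕜 (minSmoothness 𝕜 2) f (x, y)) :
    HasDerivAt (fun a => deriv (fun b => f (a, b)) y)
      (deriv (fun b => deriv (fun a => f (a, b)) x) y) x := by
  have hf2 : ContDiffAt 𝕜 2 f (x, y) := hf.of_le le_minSmoothness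
  have hdiff : ∀ᶠ q in 𝓝 (x, y), DifferentiableAt 𝕜 f q :=
    (hf2.eventually (by simp)).mono fun q hq => hq.differentiableAt (by simp)
  have hfderiv : DifferentiableAt 𝕜 (fderiv 𝕜 f) (x, y) :=
    (hf2.fderiv_right (m := 1) (by norm_num)).differentiableAt (by simp)
  have hfst : (fun a => deriv (fun b => f (a, b)) y) =ᶠ[𝓝 x] fun a => fderiv 𝕜 f (a, y) (0, 1) :=
    ((Continuous.prodMk_left y).tendsto x |>.eventually hdiff).mono
      fun _ => deriv_comp_prodMk_right
  have hsnd : (fun b => deriv (fun a => f (a, b)) x) =ᶠ[𝓝 y] fun b => fderiv 𝕜 f (x, b) (1, 0) :=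
    ((Continuous.prodMk_right x).tendsto y |>.eventually hdiff).mono
      fun _ => deriv_comp_prodMk_left
  have hderiv_snd : deriv (fun b => deriv (fun a => f (a, b)) x) y =
      fderiv 𝕜 (fderiv 𝕜 f) (x, y) (0, 1) (1, 0) :=
    hsnd.deriv_eq.trans (hasDerivAt_fderiv_comp_apply hfderiv
      ((hasDerivAt_const y x).prodMk (hasDerivAt_id y)) _).deriv
  rw [hderiv_snd, hf.isSymmSndFDerivAt le_rfl (0, 1) (1, 0)]
  exact (hasDerivAt_fderiv_comp_apply (c := fun a => (a, y)) hfderiv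
    ((hasDerivAt_id x).prodMk (hasDerivAt_const x y)) _).congr_of_eventuallyEq hfst

end MixedPartials

section Normalize

variable {E : Type*} [NormedAddCommGroup E] [InnerProductSpace ℝ E] {v : ℝ → E} {v' : E} {t : ℝ}

theorem hasDerivAt_norm (hv : HasDerivAt v v' t) (h0 : v t ≠ 0) :
    HasDerivAt (fun x => ‖v x‖) ⟪NormedSpace.normalize (v t), v'⟫ t := by
  have hsqrt := hv.norm_sq.sqrt (pow_ne_zero 2 (norm_ne_zero_iff.mpr h0))
  simp only [Real.sqrt_sq (norm_nonneg _)] at hsqrt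
  refine hsqrt.congr_deriv ?_
  rw [NormedSpace.normalize, real_inner_smul_left, mul_div_mul_left _ _ two_ne_zero, div_eq_inv_mul]

theorem hasDerivAt_normalize (hv : HasDerivAt v v' t) (h0 : v t ≠ 0) :
    HasDerivAt (fun x => NormedSpace.normalize (v x))
      (‖v t‖⁻¹ • (v' - ⟪NormedSpace.normalize (v t), v'⟫ • NormedSpace.normalize (v t))) t := by
  refine (((hasDerivAt_norm hv h0).fun_inv (norm_ne_zero_iff.mpr h0)).fun_smul hv).congr_deriv ?_
  simp only [NormedSpace.normalize]
  module

end Normalize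

section Plane

/-- The Euclidean length of a plane vector; the norm of `ℝ × ℝ` in Mathlib is the sup norm. -/
noncomputable def planeLength (a : ℝ × ℝ) : ℝ := √(a.1 ^ 2 + a.2 ^ 2)

/-- The Euclidean unit vector in the direction of a plane vector, with value `0` at `0`. -/
noncomputable def planeDirection (a : ℝ × ℝ) : ℝ × ℝ := (planeLength a)⁻¹ • a

/-- Clockwise rotation of the plane by `π / 2`, which takes the unit tangent to the unit normal. -/
def rotateClockwise (a : ℝ × ℝ) : ℝ × ℝ := (a.2, -a.1)

theorem norm_toLp_eq_planeLength (a : ℝ × ℝ) : ‖WithLp.toLp 2 a‖ = planeLength a := by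
  simp [WithLp.prod_norm_eq_of_L2, planeLength]

theorem inner_toLp_eq_dotp (a b : ℝ × ℝ) : ⟪WithLp.toLp 2 a, WithLp.toLp 2 b⟫ = dotp a b := by
  simp [WithLp.prod_inner_apply, dotp, mul_comm]

theorem normalize_toLp (a : ℝ × ℝ) :
    NormedSpace.normalize (WithLp.toLp 2 a) = WithLp.toLp 2 (planeDirection a) := by
  rw [NormedSpace.normalize, norm_toLp_eq_planeLength, planeDirection, WithLp.toLp_smul]

theorem dotp_planeDirection_self {a : ℝ × ℝ} (ha : a ≠ 0) :
    dotp (planeDirection a) (planeDirection a) = 1 := by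
  rw [← inner_toLp_eq_dotp, ← normalize_toLp, real_inner_self_eq_norm_sq,
    NormedSpace.norm_normalize_eq_one_iff.mpr (by simpa using ha), one_pow]

theorem dotp_smul_left (c : ℝ) (a b : ℝ × ℝ) : dotp (c • a) b = c * dotp a b := by
  simp only [dotp, Prod.smul_fst, Prod.smul_snd, smul_eq_mul]
  ring

theorem dotp_self_smul (a w : ℝ × ℝ) :
    dotp a a • w = dotp a w • a + dotp w (rotateClockwise a) • rotateClockwise a := by
  ext <;> simp [dotp, rotateClockwise] <;> ring

theorem sub_dotp_smul_self_eq {a : ℝ × ℝ} (ha : dotp a a = 1) (w : ℝ × ℝ) :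
    w - dotp a w • a = dotp w (rotateClockwise a) • rotateClockwise a := by
  rw [sub_eq_iff_eq_add', ← dotp_self_smul, ha, one_smul]

theorem hasDerivAt_planeDirection {v : ℝ → ℝ × ℝ} {v' : ℝ × ℝ} {t : ℝ} (hv : HasDerivAt v v' t)
    (h0 : v t ≠ 0) :
    HasDerivAt (fun x => planeDirection (v x))
      (dotp ((planeLength (v t))⁻¹ • v') (rotateClockwise (planeDirection (v t))) •
        rotateClockwise (planeDirection (v t))) t := by
  let L := WithLp.prodContinuousLinearEquiv 2 ℝ ℝ ℝ
  have hv_L2 : HasDerivAt (fun x => WithLp.toLp 2 (v x)) (WithLp.toLp 2 v') t :=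
    L.symm.hasFDerivAt.comp_hasDerivAt t hv
  have hnormalize := hasDerivAt_normalize hv_L2 (by simpa using h0)
  simp only [normalize_toLp, norm_toLp_eq_planeLength, inner_toLp_eq_dotp] at hnormalize
  have hdirection : HasDerivAt (fun x => planeDirection (v x)) ((planeLength (v t))⁻¹ •
      (v' - dotp (planeDirection (v t)) v' • planeDirection (v t))) t :=
    L.hasFDerivAt.comp_hasDerivAt t hnormalize
  rwa [sub_dotp_smul_self_eq (dotp_planeDirection_self h0), smul_smul, ← dotp_smul_left]
    at hdirection

end Plane

theorem evolution_of_unit_tangent_general (γ : ℝ × ℝ → ℝ × ℝ) (q : ℝ × ℝ)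
    (hγ : ContDiffAt ℝ 2 γ q) (σ : ℝ × ℝ → ℝ)
    (hσ : ∀ p, σ p = √((psd γ p).1 ^ 2 + (psd γ p).2 ^ 2)) (hσpos : 0 < σ q)
    (τ n u : ℝ × ℝ → ℝ × ℝ) (hτ : ∀ p, τ p = (σ p)⁻¹ • psd γ p)
    (hn : ∀ p, n p = ((τ p).2, -(τ p).1)) (hu : ∀ p, u p = ptd γ p) :
    HasDerivAt (fun t => τ (t, q.2)) (dotp ((σ q)⁻¹ • psd u q) (n q) • n q) q.1 := by
  obtain rfl : σ = fun p => planeLength (psd γ p) := funext hσ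
  obtain rfl : τ = fun p => planeDirection (psd γ p) := funext hτ
  obtain rfl : n = fun p => rotateClockwise (planeDirection (psd γ p)) := funext hn
  obtain rfl : u = ptd γ := funext hu
  have hregular : psd γ q ≠ 0 := fun h => by simp [h, planeLength] at hσpos
  have hmixed : HasDerivAt (fun t => psd γ (t, q.2)) (psd (ptd γ) q) q.1 :=
    hasDerivAt_deriv_partial_comm (by simpa using hγ)
  exact hasDerivAt_planeDirection hmixed hregular

/-- Evolution of the unit tangent of a moving regular plane curve: `𝒟_t τ = (∇_τ u · n) n`,
where `u = ∂_tγ` is the evolution velocity, `σ = ‖∂_sγ‖` the speed, `τ = σ⁻¹∂_sγ` the unit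
tangent, and `n = (τ², −τ¹)` the unit normal. -/
theorem evolution_of_unit_tangent (γ : ℝ × ℝ → ℝ × ℝ) (hγ : ContDiff ℝ (⊤ : ℕ∞) γ)
    (σ : ℝ × ℝ → ℝ)
    (hσ : ∀ q, σ q = Real.sqrt ((psd γ q).1 ^ 2 + (psd γ q).2 ^ 2))
    (hσpos : ∀ q, 0 < σ q)
    (τ n u : ℝ × ℝ → ℝ × ℝ)
    (hτ : ∀ q, τ q = (σ q)⁻¹ • psd γ q)
    (hn : ∀ q, n q = ((τ q).2, -(τ q).1))
    (hu : ∀ q, u q = ptd γ q) :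
    ∀ q, ptd τ q = dotp ((σ q)⁻¹ • psd u q) (n q) • n q :=
  fun q => (evolution_of_unit_tangent_general γ q
    (hγ.contDiffAt.of_le (WithTop.coe_le_coe.mpr le_top)) σ hσ (hσpos q) τ n u hτ hn hu).deriv
end

section
/- Let γ : ℝ × ℝ → ℝ² be a smooth family of regular plane curves with speed σ(t,s) := ‖∂_s γ(t,s)‖ > 0, unit tangent τ := σ⁻¹∂_sγ, and evolution velocity u := ∂_t γ. Then for every smooth function f : ℝ × ℝ → ℝ and all (t,s): ∂_t( σ⁻¹ ∂_s f )(t,s) − σ(t,s)⁻¹ ∂_s( ∂_t f )(t,s) = −( (σ⁻¹∂_s u)(t,s) · τ(t,s) ) · (σ⁻¹ ∂_s f)(t,s). That is, the commutator [𝒟_t, ∇_τ] equals −(∇_τ u · τ)∇_τ. -/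
/-- Partial derivative in the time variable of a scalar function of `(t,s)`. -/
noncomputable def ptds (f : ℝ × ℝ → ℝ) (q : ℝ × ℝ) : ℝ :=
  deriv (fun t => f (t, q.2)) q.1

/-- Partial derivative in the parameter variable of a scalar function of `(t,s)`. -/
noncomputable def psds (f : ℝ × ℝ → ℝ) (q : ℝ × ℝ) : ℝ :=
  deriv (fun s => f (q.1, s)) q.2

/-!
Since `∂_t` and `∂_s` commute, the only contribution to `[∂_t, σ⁻¹∂_s]` is the derivative of the
factor `σ⁻¹`, which gives `-(∂_t σ / σ) σ⁻¹∂_s`. Differentiating `σ² = ∂_sγ · ∂_sγ` and using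
`∂_t∂_sγ = ∂_su` shows that the relative stretching rate `∂_t σ / σ` equals `∇_τ u · τ`. The same
computation applies to derivatives along two fixed directions of a normed space, with a continuous
symmetric bilinear form in place of the dot product.
-/

open scoped Topology

section LineDeriv

variable {𝕜 V F : Type*} [NontriviallyNormedField 𝕜] [NormedAddCommGroup F] [NormedSpace 𝕜 F]

section Slices

variable [AddCommGroup V] [Module 𝕜 V]

theorem deriv_slice_fst_eq_lineDeriv (f : 𝕜 × V → F) (q : 𝕜 × V) :
    deriv (fun t ↦ f (t, q.2)) q.1 = lineDeriv 𝕜 f q (1, 0) := by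
  simpa [lineDeriv, Prod.add_def] using (deriv_comp_const_add (fun t ↦ f (t, q.2)) q.1 0).symm

theorem deriv_slice_snd_eq_lineDeriv (f : V × 𝕜 → F) (q : V × 𝕜) :
    deriv (fun s ↦ f (q.1, s)) q.2 = lineDeriv 𝕜 f q (0, 1) := by
  simpa [lineDeriv, Prod.add_def] using (deriv_comp_const_add (fun s ↦ f (q.1, s)) q.2 0).symm

theorem hasLineDerivAt_inv_smul {σ : V → 𝕜} {g : V → F} {σ' : 𝕜} {g' : F} {q v : V}
    (hσ : HasLineDerivAt 𝕜 σ σ' q v) (hg : HasLineDerivAt 𝕜 g g' q v) (hq : σ q ≠ 0) :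
    HasLineDerivAt 𝕜 (fun p ↦ (σ p)⁻¹ • g p) ((σ q)⁻¹ • g' - (σ' / σ q) • (σ q)⁻¹ • g q) q v := by
  have hq' : σ (q + (0 : 𝕜) • v) ≠ 0 := by simpa using hq
  refine ((HasDerivAt.fun_inv hσ hq').fun_smul hg).congr_deriv ?_
  simp only [zero_smul, add_zero]
  module

end Slices

section SecondOrder

variable [NormedAddCommGroup V] [NormedSpace 𝕜 V] {f : V → F} {q : V} {n : WithTop ℕ∞}

theorem hasFDerivAt_lineDeriv (hf : ContDiffAt 𝕜 2 f q) (v : V) :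
    HasFDerivAt (fun p ↦ lineDeriv 𝕜 f p v) ((fderiv 𝕜 (fderiv 𝕜 f) q).flip v) q := by
  have hf' : DifferentiableAt 𝕜 (fderiv 𝕜 f) q :=
    (hf.fderiv_right (m := 1) (by norm_num)).differentiableAt one_ne_zero
  have hlocal : (fun p ↦ lineDeriv 𝕜 f p v) =ᶠ[𝓝 q] fun p ↦ fderiv 𝕜 f p v := by
    filter_upwards [hf.eventually (by simp)] with p hp
    exact (hp.differentiableAt two_ne_zero).lineDeriv_eq_fderiv
  refine HasFDerivAt.congr_of_eventuallyEq ?_ hlocal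
  simpa using hf'.hasFDerivAt.clm_apply (hasFDerivAt_const v q)

theorem lineDeriv_lineDeriv_comm (hf : ContDiffAt 𝕜 n f q) (hn : minSmoothness 𝕜 2 ≤ n)
    (v w : V) :
    lineDeriv 𝕜 (fun p ↦ lineDeriv 𝕜 f p w) q v =
      lineDeriv 𝕜 (fun p ↦ lineDeriv 𝕜 f p v) q w := by
  have hf₂ : ContDiffAt 𝕜 2 f q := hf.of_le (le_minSmoothness.trans hn)
  rw [((hasFDerivAt_lineDeriv hf₂ w).hasLineDerivAt v).lineDeriv,
    ((hasFDerivAt_lineDeriv hf₂ v).hasLineDerivAt w).lineDeriv]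
  exact (hf.isSymmSndFDerivAt hn).eq v w

theorem hasLineDerivAt_lineDeriv_comm (hf : ContDiffAt 𝕜 n f q) (hn : minSmoothness 𝕜 2 ≤ n)
    (v w : V) :
    HasLineDerivAt 𝕜 (fun p ↦ lineDeriv 𝕜 f p w)
      (lineDeriv 𝕜 (fun p ↦ lineDeriv 𝕜 f p v) q w) q v := by
  rw [← lineDeriv_lineDeriv_comm hf hn]
  have hf₂ : ContDiffAt 𝕜 2 f q := hf.of_le (le_minSmoothness.trans hn)
  exact ((hasFDerivAt_lineDeriv hf₂ w).hasLineDerivAt v).lineDifferentiableAt.hasLineDerivAt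

end SecondOrder

end LineDeriv

section TangentialDerivative

variable {V E F : Type*} [NormedAddCommGroup E] [NormedSpace ℝ E] [NormedAddCommGroup F]
  [NormedSpace ℝ F] (B : E →L[ℝ] E →L[ℝ] ℝ)

section Definitions

variable [AddCommGroup V] [Module ℝ V]

/-- The speed `σ = √(∂_wγ · ∂_wγ)` of a family `γ` along the parameter direction `w`, where `·` is
the bilinear form `B`. A form rather than an inner product is used because the norm of `ℝ × ℝ` is
the sup norm. -/
noncomputable def lineSpeed (γ : V → E) (w p : V) : ℝ :=
  √(B (lineDeriv ℝ γ p w) (lineDeriv ℝ γ p w))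

/-- The tangential derivative `∇_τ f = σ⁻¹∂_wf` along `γ` in the parameter direction `w`. The unit
tangent `τ` is `∇_τ γ`. -/
noncomputable def tangentialDeriv (γ : V → E) (w : V) (f : V → F) (p : V) : F :=
  (lineSpeed B γ w p)⁻¹ • lineDeriv ℝ f p w

variable {B}

theorem hasLineDerivAt_sqrt_bilin_self (hB : ∀ x y, B x y = B y x) {X : V → E} {X' : E} {q v : V}
    (hX : HasLineDerivAt ℝ X X' q v) (hq : B (X q) (X q) ≠ 0) :
    HasLineDerivAt ℝ (fun p ↦ √(B (X p) (X p))) (B X' (X q) / √(B (X q) (X q))) q v := by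
  have hXX : HasDerivAt (fun t : ℝ ↦ B (X (q + t • v)) (X (q + t • v))) (2 * B X' (X q)) 0 := by
    refine (B.hasDerivAt_of_bilinear (fun _ ↦ hX) (fun _ ↦ hX)).congr_deriv ?_
    simp only [zero_smul, add_zero]
    rw [hB (X q) X', two_mul]
  refine (hXX.sqrt (by simpa using hq)).congr_deriv ?_
  simp only [zero_smul, add_zero]
  exact mul_div_mul_left _ _ two_ne_zero

end Definitions

variable [NormedAddCommGroup V] [NormedSpace ℝ V] {B} {γ : V → E} {q w : V}

theorem hasLineDerivAt_lineSpeed (hB : ∀ x y, B x y = B y x) (hγ : ContDiffAt ℝ 2 γ q)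
    (hq : lineSpeed B γ w q ≠ 0) (v : V) :
    HasLineDerivAt ℝ (lineSpeed B γ w)
      (B (tangentialDeriv B γ w (fun p ↦ lineDeriv ℝ γ p v) q) (tangentialDeriv B γ w γ q) *
        lineSpeed B γ w q) q v := by
  have hBq : B (lineDeriv ℝ γ q w) (lineDeriv ℝ γ q w) ≠ 0 := fun h ↦ hq (by simp [lineSpeed, h])
  have hmixed := hasLineDerivAt_lineDeriv_comm hγ (by simp) v w
  have hspeed : HasLineDerivAt ℝ (lineSpeed B γ w)
      (B (lineDeriv ℝ (fun p ↦ lineDeriv ℝ γ p v) q w) (lineDeriv ℝ γ q w) / lineSpeed B γ w q)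
      q v := hasLineDerivAt_sqrt_bilin_self hB hmixed hBq
  convert hspeed using 1
  simp only [tangentialDeriv, map_smul, smul_apply, smul_eq_mul]
  field_simp

theorem commutator_material_tangential_general (hB : ∀ x y, B x y = B y x)
    (hγ : ContDiffAt ℝ 2 γ q) (hq : lineSpeed B γ w q ≠ 0) {f : V → F}
    (hf : ContDiffAt ℝ 2 f q) (v : V) :
    lineDeriv ℝ (tangentialDeriv B γ w f) q v -
        tangentialDeriv B γ w (fun p ↦ lineDeriv ℝ f p v) q =
      -B (tangentialDeriv B γ w (fun p ↦ lineDeriv ℝ γ p v) q) (tangentialDeriv B γ w γ q) •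
        tangentialDeriv B γ w f q := by
  have hσ := hasLineDerivAt_lineSpeed hB hγ hq v
  have hf_mixed := hasLineDerivAt_lineDeriv_comm hf (by simp) v w
  have hquot : lineDeriv ℝ (tangentialDeriv B γ w f) q v = _ :=
    (hasLineDerivAt_inv_smul hσ hf_mixed hq).lineDeriv
  rw [hquot, mul_div_cancel_right₀ _ hq, neg_smul]
  exact sub_sub_cancel_left _ _

end TangentialDerivative

section Plane

/-- The dot product `dotp` of `ℝ²` as a continuous bilinear form. -/
noncomputable def dotpL : ℝ × ℝ →L[ℝ] ℝ × ℝ →L[ℝ] ℝ :=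
  (ContinuousLinearMap.mul ℝ ℝ).bilinearComp (.fst ℝ ℝ ℝ) (.fst ℝ ℝ ℝ) +
    (ContinuousLinearMap.mul ℝ ℝ).bilinearComp (.snd ℝ ℝ ℝ) (.snd ℝ ℝ ℝ)

theorem dotpL_apply (a b : ℝ × ℝ) : dotpL a b = dotp a b := rfl

theorem dotpL_symm (a b : ℝ × ℝ) : dotpL a b = dotpL b a := by
  simp only [dotpL_apply, dotp, mul_comm]

theorem ptd_eq_lineDeriv (f : ℝ × ℝ → ℝ × ℝ) : ptd f = fun q ↦ lineDeriv ℝ f q (1, 0) :=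
  funext (deriv_slice_fst_eq_lineDeriv f)

theorem psd_eq_lineDeriv (f : ℝ × ℝ → ℝ × ℝ) : psd f = fun q ↦ lineDeriv ℝ f q (0, 1) :=
  funext (deriv_slice_snd_eq_lineDeriv f)

theorem ptds_eq_lineDeriv (f : ℝ × ℝ → ℝ) : ptds f = fun q ↦ lineDeriv ℝ f q (1, 0) :=
  funext (deriv_slice_fst_eq_lineDeriv f)

theorem psds_eq_lineDeriv (f : ℝ × ℝ → ℝ) : psds f = fun q ↦ lineDeriv ℝ f q (0, 1) :=
  funext (deriv_slice_snd_eq_lineDeriv f)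

theorem lineSpeed_dotpL (γ : ℝ × ℝ → ℝ × ℝ) (q : ℝ × ℝ) :
    lineSpeed dotpL γ (0, 1) q = √((psd γ q).1 ^ 2 + (psd γ q).2 ^ 2) := by
  simp only [lineSpeed, psd_eq_lineDeriv, dotpL_apply, dotp, sq]

end Plane

/-- Commutator of the material derivative with the tangential derivative along a moving
regular plane curve: for every smooth scalar `f`,
`𝒟_t(∇_τ f) − ∇_τ(𝒟_t f) = −(∇_τ u · τ)·∇_τ f`, where `u = ∂_tγ`, `σ = ‖∂_sγ‖`,
`τ = σ⁻¹∂_sγ`, and `∇_τ f = σ⁻¹∂_s f`. -/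
theorem commutator_material_tangential (γ : ℝ × ℝ → ℝ × ℝ) (hγ : ContDiff ℝ (⊤ : ℕ∞) γ)
    (σ : ℝ × ℝ → ℝ)
    (hσ : ∀ q, σ q = Real.sqrt ((psd γ q).1 ^ 2 + (psd γ q).2 ^ 2))
    (hσpos : ∀ q, 0 < σ q)
    (τ u : ℝ × ℝ → ℝ × ℝ)
    (hτ : ∀ q, τ q = (σ q)⁻¹ • psd γ q)
    (hu : ∀ q, u q = ptd γ q) :
    ∀ f : ℝ × ℝ → ℝ, ContDiff ℝ (⊤ : ℕ∞) f →
      ∀ q, ptds (fun q' => (σ q')⁻¹ * psds f q') q - (σ q)⁻¹ * psds (fun q' => ptds f q') q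
        = -(dotp ((σ q)⁻¹ • psd u q) (τ q)) * ((σ q)⁻¹ * psds f q) := by
  obtain rfl : σ = lineSpeed dotpL γ (0, 1) := funext fun q ↦ by rw [hσ, lineSpeed_dotpL]
  obtain rfl : u = ptd γ := funext hu
  intro f hf q
  have hγ₂ : ContDiff ℝ 2 γ := contDiff_infty.1 hγ 2
  have hf₂ : ContDiff ℝ 2 f := contDiff_infty.1 hf 2
  simp only [hτ, ptd_eq_lineDeriv, psd_eq_lineDeriv, ptds_eq_lineDeriv, psds_eq_lineDeriv]
  exact commutator_material_tangential_general dotpL_symm hγ₂.contDiffAt (hσpos q).ne'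
    hf₂.contDiffAt (1, 0)
end

section
/- Let f : ℝ² → ℝ be C² and let γ : ℝ → ℝ² be a C² regular plane curve with speed σ(s) := ‖γ'(s)‖ > 0, unit tangent τ := σ⁻¹γ', unit normal n := (τ², −τ¹), and signed curvature κ := (σ⁻¹n')·τ. Then for every s: Δf(γ(s)) = σ(s)⁻¹·d/ds[ σ⁻¹·d/ds( f∘γ ) ](s) + (Hess f)(γ(s))[n(s), n(s)] + κ(s)·( ∇f(γ(s)) · n(s) ), where Δf = ∂₁₁f + ∂₂₂f, Hess f is the second derivative bilinear form of f, and ∇f is the gradient of f. That is, the Laplacian restricted to a curve decomposes as Δf = ∇_τ∇_τ f + ∇²f(n,n) + κ∇_n f. -/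
/-!
Write `D` for the derivative with respect to arc length. By the chain and product rules,
`D D (f ∘ γ) = D²f(τ, τ) + Df(D τ)`. Differentiating `|τ|² = 1` shows that `D τ` is normal to the
curve, which gives the Frenet equation `D τ = -κ n`. The Laplacian is the trace of `D²f`, which can
be computed in the orthonormal frame `(τ, n)` as `D²f(τ, τ) + D²f(n, n)`.
-/

open scoped Topology

section Trace

variable {R M : Type*} [CommRing R] [AddCommGroup M] [Module R M]

theorem bilin_add_bilin_rotate_eq_trace (B : R × R →ₗ[R] R × R →ₗ[R] M) {u : R × R}
    (hu : u.1 ^ 2 + u.2 ^ 2 = 1) :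
    B u u + B (u.2, -u.1) (u.2, -u.1) = B (1, 0) (1, 0) + B (0, 1) (0, 1) := by
  have expand (a b : R) : B (a, b) (a, b) = a ^ 2 • B (1, 0) (1, 0)
      + (a * b) • (B (1, 0) (0, 1) + B (0, 1) (1, 0)) + b ^ 2 • B (0, 1) (0, 1) := by
    have basis_expansion : ((a, b) : R × R) = a • (1, 0) + b • (0, 1) := by simp
    rw [basis_expansion]
    simp only [map_add, map_smul, LinearMap.add_apply, LinearMap.smul_apply]
    module
  obtain ⟨a, b⟩ := u
  rw [expand a b, expand b (-a)]
  linear_combination (norm := module) hu • (B (1, 0) (1, 0) + B (0, 1) (0, 1))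

end Trace

section ArcDeriv

variable {E F : Type*} [NormedAddCommGroup E] [NormedSpace ℝ E]
  [NormedAddCommGroup F] [NormedSpace ℝ F]

theorem fderiv_fderiv_apply_const {f : E → F} {x : E} (hf : DifferentiableAt ℝ (fderiv ℝ f) x)
    (v w : E) : fderiv ℝ (fun y => fderiv ℝ f y v) x w = fderiv ℝ (fderiv ℝ f) x w v := by
  simp [fderiv_clm_apply hf (differentiableAt_const v)]

/-- The tangential derivative `∇_τ g = σ⁻¹ g'` of a function `g` of the parameter of a curve with
speed `σ`. It acts on functions of the parameter, so that it can be iterated and also applied to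
the curve and to its frame. -/
noncomputable def arcDeriv (σ : ℝ → ℝ) (g : ℝ → E) (t : ℝ) : E :=
  (σ t)⁻¹ • deriv g t

variable {σ : ℝ → ℝ} {γ : ℝ → E} {f : E → F} {s : ℝ}

theorem arcDeriv_congr {g h : ℝ → E} (hgh : g =ᶠ[𝓝 s] h) : arcDeriv σ g s = arcDeriv σ h s := by
  rw [arcDeriv, arcDeriv, hgh.deriv_eq]

theorem arcDeriv_comp (hf : DifferentiableAt ℝ f (γ s)) (hγ : DifferentiableAt ℝ γ s) :
    arcDeriv σ (f ∘ γ) s = fderiv ℝ f (γ s) (arcDeriv σ γ s) := by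
  rw [arcDeriv, arcDeriv, fderiv_comp_deriv s hf hγ, map_smul]

theorem arcDeriv_clm_apply {L : ℝ → E →L[ℝ] F} {v : ℝ → E} (hL : DifferentiableAt ℝ L s)
    (hv : DifferentiableAt ℝ v s) :
    arcDeriv σ (fun t => L t (v t)) s = arcDeriv σ L s (v s) + L s (arcDeriv σ v s) := by
  simp only [arcDeriv, deriv_clm_apply hL hv, smul_add, smul_apply, map_smul]

theorem arcDeriv_arcDeriv_comp (hf : ∀ᶠ t in 𝓝 s, DifferentiableAt ℝ f (γ t))
    (hf' : DifferentiableAt ℝ (fderiv ℝ f) (γ s)) (hγ : ∀ᶠ t in 𝓝 s, DifferentiableAt ℝ γ t)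
    (hτ : DifferentiableAt ℝ (arcDeriv σ γ) s) :
    arcDeriv σ (arcDeriv σ (f ∘ γ)) s =
      fderiv ℝ (fderiv ℝ f) (γ s) (arcDeriv σ γ s) (arcDeriv σ γ s)
        + fderiv ℝ f (γ s) (arcDeriv σ (arcDeriv σ γ) s) := by
  have chain : arcDeriv σ (f ∘ γ) =ᶠ[𝓝 s] fun t => (fderiv ℝ f ∘ γ) t (arcDeriv σ γ t) := by
    filter_upwards [hf, hγ] with t hft hγt using arcDeriv_comp hft hγt
  have hγs : DifferentiableAt ℝ γ s := hγ.self_of_nhds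
  rw [arcDeriv_congr chain, arcDeriv_clm_apply (hf'.comp s hγs) hτ, arcDeriv_comp hf' hγs,
    Function.comp_apply]

end ArcDeriv

theorem dot_deriv_eq_zero_of_eventually_const {v : ℝ → ℝ × ℝ} {s c : ℝ}
    (hv : DifferentiableAt ℝ v s) (hc : ∀ᶠ t in 𝓝 s, (v t).1 ^ 2 + (v t).2 ^ 2 = c) :
    (v s).1 * (deriv v s).1 + (v s).2 * (deriv v s).2 = 0 := by
  have hfst : HasDerivAt (fun t => (v t).1) (deriv v s).1 s :=
    (ContinuousLinearMap.fst ℝ ℝ ℝ).hasFDerivAt.comp_hasDerivAt s hv.hasDerivAt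
  have hsnd : HasDerivAt (fun t => (v t).2) (deriv v s).2 s :=
    (ContinuousLinearMap.snd ℝ ℝ ℝ).hasFDerivAt.comp_hasDerivAt s hv.hasDerivAt
  have deriv_sq := ((hfst.pow 2).add (hsnd.pow 2)).unique
    ((hasDerivAt_const s c).congr_of_eventuallyEq hc)
  norm_num at deriv_sq
  linarith

namespace PlaneCurve

/-- The Euclidean speed of a plane curve, written out in coordinates because the norm of `ℝ × ℝ`
is the sup norm. -/
noncomputable def speed (γ : ℝ → ℝ × ℝ) (t : ℝ) : ℝ :=
  √((deriv γ t).1 ^ 2 + (deriv γ t).2 ^ 2)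

/-- The unit tangent `τ` of a plane curve; its value is `0` where the speed vanishes. -/
noncomputable def unitTangent (γ : ℝ → ℝ × ℝ) : ℝ → ℝ × ℝ :=
  arcDeriv (speed γ) γ

/-- The unit normal `n` of a plane curve, chosen so that the unit tangent is its counterclockwise
rotation by `π / 2`. -/
noncomputable def unitNormal (γ : ℝ → ℝ × ℝ) (t : ℝ) : ℝ × ℝ :=
  ((unitTangent γ t).2, -(unitTangent γ t).1)

/-- The signed curvature `κ = ∇_τ n · τ` of a plane curve, positive on a counterclockwise
circle. -/
noncomputable def signedCurvature (γ : ℝ → ℝ × ℝ) (t : ℝ) : ℝ :=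
  (arcDeriv (speed γ) (unitNormal γ) t).1 * (unitTangent γ t).1
    + (arcDeriv (speed γ) (unitNormal γ) t).2 * (unitTangent γ t).2

variable {γ : ℝ → ℝ × ℝ} {s : ℝ}

theorem speed_sq (γ : ℝ → ℝ × ℝ) (t : ℝ) :
    speed γ t ^ 2 = (deriv γ t).1 ^ 2 + (deriv γ t).2 ^ 2 :=
  Real.sq_sqrt (by positivity)

theorem differentiableAt_of_speed_ne_zero (hs : speed γ s ≠ 0) : DifferentiableAt ℝ γ s := by
  refine differentiableAt_of_deriv_ne_zero fun h => hs ?_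
  simp [speed, h]

theorem differentiableAt_speed (hγ : DifferentiableAt ℝ (deriv γ) s) (hs : speed γ s ≠ 0) :
    DifferentiableAt ℝ (speed γ) s := by
  refine ((hγ.fst.pow 2).add (hγ.snd.pow 2)).sqrt ?_
  exact (speed_sq γ s).symm.trans_ne (pow_ne_zero 2 hs)

theorem eventually_speed_ne_zero (hγ : DifferentiableAt ℝ (deriv γ) s) (hs : speed γ s ≠ 0) :
    ∀ᶠ t in 𝓝 s, speed γ t ≠ 0 :=
  (differentiableAt_speed hγ hs).continuousAt.eventually_ne hs

theorem differentiableAt_unitTangent (hγ : DifferentiableAt ℝ (deriv γ) s) (hs : speed γ s ≠ 0) :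
    DifferentiableAt ℝ (unitTangent γ) s :=
  ((differentiableAt_speed hγ hs).inv hs).smul hγ

theorem unitTangent_sq_add_sq (hs : speed γ s ≠ 0) :
    (unitTangent γ s).1 ^ 2 + (unitTangent γ s).2 ^ 2 = 1 := by
  simp only [unitTangent, arcDeriv, Prod.smul_fst, Prod.smul_snd, smul_eq_mul]
  field_simp
  exact (speed_sq γ s).symm

theorem deriv_unitNormal (hτ : DifferentiableAt ℝ (unitTangent γ) s) :
    deriv (unitNormal γ) s = ((deriv (unitTangent γ) s).2, -(deriv (unitTangent γ) s).1) :=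
  ((hasFDerivAt_snd.comp_hasDerivAt s hτ.hasDerivAt).prodMk
    (hasFDerivAt_fst.comp_hasDerivAt s hτ.hasDerivAt).neg).deriv

theorem arcDeriv_unitTangent (hγ : DifferentiableAt ℝ (deriv γ) s) (hs : speed γ s ≠ 0) :
    arcDeriv (speed γ) (unitTangent γ) s = -signedCurvature γ s • unitNormal γ s := by
  have hτ := differentiableAt_unitTangent hγ hs
  have unit := unitTangent_sq_add_sq hs
  have orthogonal := dot_deriv_eq_zero_of_eventually_const hτ
    ((eventually_speed_ne_zero hγ hs).mono fun t => unitTangent_sq_add_sq)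
  simp only [signedCurvature, unitNormal, arcDeriv, deriv_unitNormal hτ]
  ext <;> simp only [Prod.smul_fst, Prod.smul_snd, smul_eq_mul]
  · linear_combination (speed γ s)⁻¹ * (-(deriv (unitTangent γ) s).1 * unit
      + (unitTangent γ s).1 * orthogonal)
  · linear_combination (speed γ s)⁻¹ * (-(deriv (unitTangent γ) s).2 * unit
      + (unitTangent γ s).2 * orthogonal)

end PlaneCurve

open PlaneCurve in
theorem laplacian_decomposition_on_curve_general {F : Type*} [NormedAddCommGroup F]
    [NormedSpace ℝ F] {f : ℝ × ℝ → F} {γ : ℝ → ℝ × ℝ} {s : ℝ}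
    (hf : ∀ᶠ t in 𝓝 s, DifferentiableAt ℝ f (γ t))
    (hf' : DifferentiableAt ℝ (fderiv ℝ f) (γ s)) (hγ : DifferentiableAt ℝ (deriv γ) s)
    (hs : speed γ s ≠ 0) :
    fderiv ℝ (fun y => fderiv ℝ f y (1, 0)) (γ s) (1, 0)
        + fderiv ℝ (fun y => fderiv ℝ f y (0, 1)) (γ s) (0, 1)
      = arcDeriv (speed γ) (arcDeriv (speed γ) (f ∘ γ)) s
        + fderiv ℝ (fun y => fderiv ℝ f y (unitNormal γ s)) (γ s) (unitNormal γ s)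
        + signedCurvature γ s • fderiv ℝ f (γ s) (unitNormal γ s) := by
  have second_deriv := arcDeriv_arcDeriv_comp hf hf'
    ((eventually_speed_ne_zero hγ hs).mono fun t => differentiableAt_of_speed_ne_zero)
    (differentiableAt_unitTangent hγ hs)
  have frenet := arcDeriv_unitTangent hγ hs
  set H := fderiv ℝ (fderiv ℝ f) (γ s)
  have trace : H (unitTangent γ s) (unitTangent γ s) + H (unitNormal γ s) (unitNormal γ s)
      = H (1, 0) (1, 0) + H (0, 1) (0, 1) :=
    bilin_add_bilin_rotate_eq_trace H.toLinearMap₁₂ (unitTangent_sq_add_sq hs)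
  simp only [fderiv_fderiv_apply_const hf']
  rw [← trace, second_deriv, ← unitTangent, frenet, map_smul]
  module

/-- Decomposition of the Laplacian along a regular plane curve: for a `C²` function
`f : ℝ² → ℝ` and a `C²` regular curve `γ` with speed `σ = ‖γ'‖`, unit tangent `τ = σ⁻¹γ'`,
unit normal `n = (τ², −τ¹)`, and signed curvature `κ = (σ⁻¹n')·τ`,
`Δf = ∇_τ∇_τ f + (Hess f)(n,n) + κ·∇_n f` along the curve. -/
theorem laplacian_decomposition_on_curve (f : ℝ × ℝ → ℝ) (hf : ContDiff ℝ 2 f)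
    (γ : ℝ → ℝ × ℝ) (hγ : ContDiff ℝ 2 γ)
    (σ : ℝ → ℝ)
    (hσ : ∀ s, σ s = Real.sqrt ((deriv γ s).1 ^ 2 + (deriv γ s).2 ^ 2))
    (hσpos : ∀ s, 0 < σ s)
    (τ n : ℝ → ℝ × ℝ) (κ : ℝ → ℝ)
    (hτ : ∀ s, τ s = (σ s)⁻¹ • deriv γ s)
    (hn : ∀ s, n s = ((τ s).2, -(τ s).1))
    (hκ : ∀ s, κ s = ((σ s)⁻¹ • deriv n s).1 * (τ s).1 + ((σ s)⁻¹ • deriv n s).2 * (τ s).2) :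
    ∀ s,
      fderiv ℝ (fun y => fderiv ℝ f y ((1 : ℝ), (0 : ℝ))) (γ s) ((1 : ℝ), (0 : ℝ))
        + fderiv ℝ (fun y => fderiv ℝ f y ((0 : ℝ), (1 : ℝ))) (γ s) ((0 : ℝ), (1 : ℝ))
      = (σ s)⁻¹ * deriv (fun s' => (σ s')⁻¹ * deriv (fun s'' => f (γ s'')) s') s
        + fderiv ℝ (fun y => fderiv ℝ f y (n s)) (γ s) (n s)
        + κ s * fderiv ℝ f (γ s) (n s) := by
  obtain rfl : σ = PlaneCurve.speed γ := funext hσ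
  obtain rfl : τ = PlaneCurve.unitTangent γ := funext hτ
  obtain rfl : n = PlaneCurve.unitNormal γ := funext hn
  obtain rfl : κ = PlaneCurve.signedCurvature γ := funext hκ
  intro s
  exact laplacian_decomposition_on_curve_general
    (.of_forall fun t => hf.differentiable two_ne_zero (γ t))
    ((hf.fderiv_right one_add_one_eq_two.le).differentiable one_ne_zero (γ s))
    (hγ.differentiable_deriv_two s) (hσpos s).ne'
end

section
/- Let I ⊆ ℝ be an open interval, U ⊆ ℝ² open, and let v, h : I × U → ℝ² be C² and p : I × U → ℝ be C², satisfying the ideal incompressible MHD equations ∂_t v + (v·∇)v + ∇p = (h·∇)h and ∂_t h + (v·∇)h = (h·∇)v on I × U. Define the scalar curls ϖ₊ := Curl(v + h) and ϖ₋ := Curl(v − h), where Curl w := ∂₁w² − ∂₂w¹, and define the bilinear form 𝓑(∂a, ∂b) := Σ_{k=1,2} ( ∂₁a^k·∂_k b² − ∂₂a^k·∂_k b¹ ). Then on I × U: ∂_t ϖ₋ + ((v + h)·∇)ϖ₋ + 𝓑(∂(v+h), ∂(v−h)) = 0 and ∂_t ϖ₊ + ((v − h)·∇)ϖ₊ + 𝓑(∂(v−h),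 ∂(v+h)) = 0. (Transport equations for the vorticity–current combinations along the Elsässer characteristics.) -/
/-- The two-dimensional scalar curl `Curl w = ∂₁w² − ∂₂w¹`. -/
noncomputable def curl2 (w : ℝ × ℝ → ℝ × ℝ) (x : ℝ × ℝ) : ℝ :=
  pd1 (fun y => (w y).2) x - pd2 (fun y => (w y).1) x

/-- The bilinear form `𝓑(∂a, ∂b) = Σ_{k=1,2} (∂₁a^k·∂_k b² − ∂₂a^k·∂_k b¹)`. -/
noncomputable def Bform (a b : ℝ × ℝ → ℝ × ℝ) (x : ℝ × ℝ) : ℝ :=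
  pd1 (fun y => (a y).1) x * pd1 (fun y => (b y).2) x
    + pd1 (fun y => (a y).2) x * pd2 (fun y => (b y).2) x
    - pd2 (fun y => (a y).1) x * pd1 (fun y => (b y).1) x
    - pd2 (fun y => (a y).2) x * pd2 (fun y => (b y).1) x

/-! In the Elsässer variables `a = v + h`, `b = v - h` the MHD system says `∂ₜb + (a·∇)b + ∇p = 0`,
that is, `Db (1, a) = -∇p` in spacetime, together with the same equation with `a` and `b`
exchanged. Differentiating in space and using the symmetry of `D²b` gives the matrix
identity `(∂ₜ + a·∇)∂b + ∂b ∘ ∂a = -∂∇p`. The antisymmetric part of `∂b` is the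
curl, that of `∂b ∘ ∂a` is `𝓑(∂a, ∂b)`, and that of the Hessian `∂∇p` vanishes. -/

open ContinuousLinearMap
open scoped Topology

section NormedSpace

variable {𝕜 : Type*} [NontriviallyNormedField 𝕜]
  {E : Type*} [NormedAddCommGroup E] [NormedSpace 𝕜 E]
  {F : Type*} [NormedAddCommGroup F] [NormedSpace 𝕜 F]
  {G : Type*} [NormedAddCommGroup G] [NormedSpace 𝕜 G]

theorem differentiableAt_slice_right {f : E × F → G} {x : E} {y : F}
    (hf : DifferentiableAt 𝕜 f (x, y)) : DifferentiableAt 𝕜 (fun y' => f (x, y')) y :=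
  hf.comp y (hasFDerivAt_prodMk_right x y).differentiableAt

theorem fderiv_slice_right {f : E × F → G} {x : E} {y : F} (hf : DifferentiableAt 𝕜 f (x, y)) :
    fderiv 𝕜 (fun y' => f (x, y')) y = fderiv 𝕜 f (x, y) ∘L inr 𝕜 E F :=
  (hf.hasFDerivAt.comp y (hasFDerivAt_prodMk_right x y)).fderiv

theorem deriv_slice_left {f : 𝕜 × F → G} {t : 𝕜} {y : F} (hf : DifferentiableAt 𝕜 f (t, y)) :
    deriv (fun t' => f (t', y)) t = fderiv 𝕜 f (t, y) (1, 0) := by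
  simpa [Function.comp_def] using
    (hf.hasFDerivAt.comp t (hasFDerivAt_prodMk_left t y)).hasDerivAt.deriv

theorem deriv_slice_left_add_fderiv_slice_right {f : 𝕜 × F → G} {t : 𝕜} {y : F}
    (hf : DifferentiableAt 𝕜 f (t, y)) (u : F) :
    deriv (fun t' => f (t', y)) t + fderiv 𝕜 (fun y' => f (t, y')) y u =
      fderiv 𝕜 f (t, y) (1, u) := by
  rw [deriv_slice_left hf, fderiv_slice_right hf, comp_apply, inr_apply, ← map_add]
  simp

theorem elsasser_equations {v h : 𝕜 × E → E} {t : 𝕜} {x q : E}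
    (hv : DifferentiableAt 𝕜 v (t, x)) (hh : DifferentiableAt 𝕜 h (t, x))
    (hmomentum : deriv (fun t' => v (t', x)) t + fderiv 𝕜 (fun y => v (t, y)) x (v (t, x)) + q =
      fderiv 𝕜 (fun y => h (t, y)) x (h (t, x)))
    (hinduction : deriv (fun t' => h (t', x)) t + fderiv 𝕜 (fun y => h (t, y)) x (v (t, x)) =
      fderiv 𝕜 (fun y => v (t, y)) x (h (t, x))) :
    fderiv 𝕜 (fun z => v z - h z) (t, x) (1, v (t, x) + h (t, x)) + q = 0 ∧
      fderiv 𝕜 (fun z => v z + h z) (t, x) (1, v (t, x) - h (t, x)) + q = 0 := by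
  rw [fderiv_fun_sub hv hh, fderiv_fun_add hv hh, sub_apply, add_apply]
  simp only [← deriv_slice_left_add_fderiv_slice_right hv,
    ← deriv_slice_left_add_fderiv_slice_right hh, map_add, map_sub]
  constructor
  · linear_combination (norm := module) hmomentum - hinduction
  · linear_combination (norm := module) hmomentum + hinduction

theorem fderiv_fderiv_apply_vectorField {f : E → F} {X : E → E} {z : E}
    (hf : DifferentiableAt 𝕜 (fderiv 𝕜 f) z) (hsymm : IsSymmSndFDerivAt 𝕜 f z)
    (hX : DifferentiableAt 𝕜 X z) :
    fderiv 𝕜 (fun y => fderiv 𝕜 f y (X y)) z =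
      fderiv 𝕜 (fderiv 𝕜 f) z (X z) + fderiv 𝕜 f z ∘L fderiv 𝕜 X z := by
  ext u
  rw [fderiv_clm_apply hf hX]
  simp [hsymm.eq u (X z), add_comm]

theorem fderiv_fderiv_apply_slice {a : 𝕜 × E → E} {b : 𝕜 × E → F} {t : 𝕜} {x : E}
    (ha : DifferentiableAt 𝕜 a (t, x)) (hb : DifferentiableAt 𝕜 b (t, x))
    (hb' : DifferentiableAt 𝕜 (fderiv 𝕜 b) (t, x)) (hsymm : IsSymmSndFDerivAt 𝕜 b (t, x)) :
    fderiv 𝕜 (fun y => fderiv 𝕜 b (t, y) (1, a (t, y))) x =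
      fderiv 𝕜 (fderiv 𝕜 b) (t, x) (1, a (t, x)) ∘L inr 𝕜 𝕜 E +
        fderiv 𝕜 (fun y => b (t, y)) x ∘L fderiv 𝕜 (fun y => a (t, y)) x := by
  have hX : DifferentiableAt 𝕜 (fun z => ((1 : 𝕜), a z)) (t, x) := by fun_prop
  have fderiv_X_comp_inr : fderiv 𝕜 (fun z => ((1 : 𝕜), a z)) (t, x) ∘L inr 𝕜 𝕜 E =
      inr 𝕜 𝕜 E ∘L fderiv 𝕜 a (t, x) ∘L inr 𝕜 𝕜 E := by
    rw [(differentiableAt_const _).fderiv_prodMk ha]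
    ext <;> simp
  rw [fderiv_slice_right (hb'.clm_apply hX), fderiv_fderiv_apply_vectorField hb' hsymm hX,
    add_comp, comp_assoc, fderiv_X_comp_inr, fderiv_slice_right ha, fderiv_slice_right hb,
    comp_assoc]

theorem differentiableAt_fderiv_of_contDiffAt {f : E → F} {z : E} (hf : ContDiffAt 𝕜 2 f z) :
    DifferentiableAt 𝕜 (fderiv 𝕜 f) z :=
  (hf.fderiv_right (m := 1) (by norm_num)).differentiableAt one_ne_zero

end NormedSpace

section Curl

/-- The antisymmetric part `L₂₁ - L₁₂` of a `2 × 2` matrix, viewed as a linear endomorphism of the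
plane; the curl of a vector field is this form evaluated at its Jacobian. -/
noncomputable def curlForm : (ℝ × ℝ →L[ℝ] ℝ × ℝ) →L[ℝ] ℝ :=
  snd ℝ ℝ ℝ ∘L apply ℝ (ℝ × ℝ) (1, 0) - fst ℝ ℝ ℝ ∘L apply ℝ (ℝ × ℝ) (0, 1)

theorem curlForm_apply (L : ℝ × ℝ →L[ℝ] ℝ × ℝ) : curlForm L = (L (1, 0)).2 - (L (0, 1)).1 := by
  simp [curlForm]

theorem curl2_eq_curlForm {w : ℝ × ℝ → ℝ × ℝ} {x : ℝ × ℝ} (hw : DifferentiableAt ℝ w x) :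
    curl2 w x = curlForm (fderiv ℝ w x) := by
  simp [curl2, pd1, pd2, curlForm_apply, fderiv.fst hw, fderiv.snd hw]

theorem Bform_eq_curlForm_comp {a b : ℝ × ℝ → ℝ × ℝ} {x : ℝ × ℝ}
    (ha : DifferentiableAt ℝ a x) (hb : DifferentiableAt ℝ b x) :
    Bform a b x = curlForm (fderiv ℝ b x ∘L fderiv ℝ a x) := by
  have fderiv_b_apply (u : ℝ × ℝ) :
      fderiv ℝ b x u = u.1 • fderiv ℝ b x (1, 0) + u.2 • fderiv ℝ b x (0, 1) := by
    rw [← map_smul, ← map_smul, ← map_add]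
    simp
  simp only [Bform, pd1, pd2, curlForm_apply, fderiv.fst ha, fderiv.snd ha, fderiv.fst hb,
    fderiv.snd hb, comp_apply, coe_fst', coe_snd']
  rw [fderiv_b_apply (fderiv ℝ a x (1, 0)), fderiv_b_apply (fderiv ℝ a x (0, 1))]
  simp only [Prod.fst_add, Prod.snd_add, Prod.smul_fst, Prod.smul_snd, smul_eq_mul]
  ring

theorem curl2_congr {w₁ w₂ : ℝ × ℝ → ℝ × ℝ} {x : ℝ × ℝ} (hw : w₁ =ᶠ[𝓝 x] w₂) :
    curl2 w₁ x = curl2 w₂ x := by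
  have hw_fst : (fun y => (w₁ y).1) =ᶠ[𝓝 x] fun y => (w₂ y).1 := hw.fun_comp Prod.fst
  have hw_snd : (fun y => (w₁ y).2) =ᶠ[𝓝 x] fun y => (w₂ y).2 := hw.fun_comp Prod.snd
  simp only [curl2, pd1, pd2, hw_fst.fderiv_eq, hw_snd.fderiv_eq]

theorem curl2_neg (w : ℝ × ℝ → ℝ × ℝ) (x : ℝ × ℝ) : curl2 (fun y => -w y) x = -curl2 w x := by
  simp only [curl2, pd1, pd2, Prod.fst_neg, Prod.snd_neg, fderiv_fun_neg, neg_apply]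
  ring

theorem curl2_gradient {f : ℝ × ℝ → ℝ} {x : ℝ × ℝ} (hf : ∀ᶠ y in 𝓝 x, DifferentiableAt ℝ f y)
    (hgrad : DifferentiableAt ℝ (fun y => (pd1 f y, pd2 f y)) x) :
    curl2 (fun y => (pd1 f y, pd2 f y)) x = 0 := by
  have fderiv_eq : fderiv ℝ f = fun y => pd1 f y • fst ℝ ℝ ℝ + pd2 f y • snd ℝ ℝ ℝ := by
    ext y <;> simp [pd1, pd2]
  have hf' : DifferentiableAt ℝ (fderiv ℝ f) x := by
    rw [fderiv_eq]
    exact (hgrad.fst.smul_const _).add (hgrad.snd.smul_const _)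
  have hsymm : IsSymmSndFDerivAt ℝ f x :=
    second_derivative_symmetric_of_eventually (hf.mono fun _ hy => hy.hasFDerivAt) hf'.hasFDerivAt
  have fderiv_apply_const (u : ℝ × ℝ) :
      fderiv ℝ (fun y => fderiv ℝ f y u) x = (fderiv ℝ (fderiv ℝ f) x).flip u := by
    simp [fderiv_clm_apply hf' (differentiableAt_const u)]
  simp only [curl2, pd1, pd2, fderiv_apply_const, flip_apply]
  rw [hsymm.eq, sub_self]

end Curl

section Transport

variable {a b : ℝ × (ℝ × ℝ) → ℝ × ℝ} {t : ℝ} {x : ℝ × ℝ}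

theorem hasFDerivAt_curl2_slice {z : ℝ × (ℝ × ℝ)} (hb : ContDiffAt ℝ 2 b z) :
    HasFDerivAt (fun z' : ℝ × (ℝ × ℝ) => curl2 (fun y => b (z'.1, y)) z'.2)
      (curlForm ∘L precomp (ℝ × ℝ) (inr ℝ ℝ (ℝ × ℝ)) ∘L fderiv ℝ (fderiv ℝ b) z) z := by
  refine ((curlForm ∘L precomp (ℝ × ℝ) (inr ℝ ℝ (ℝ × ℝ))).hasFDerivAt.comp z
    (differentiableAt_fderiv_of_contDiffAt hb).hasFDerivAt).congr_of_eventuallyEq ?_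
  filter_upwards [hb.eventually (by simp)] with z' hz'
  have hbz' : DifferentiableAt ℝ b (z'.1, z'.2) := hz'.differentiableAt two_ne_zero
  simp [curl2_eq_curlForm (differentiableAt_slice_right hbz'), fderiv_slice_right hbz']

theorem fderiv_curl2_slice_add_Bform (ha : DifferentiableAt ℝ a (t, x))
    (hb : ContDiffAt ℝ 2 b (t, x)) :
    fderiv ℝ (fun z : ℝ × (ℝ × ℝ) => curl2 (fun y => b (z.1, y)) z.2) (t, x) (1, a (t, x)) +
        Bform (fun y => a (t, y)) (fun y => b (t, y)) x =
      curl2 (fun y => fderiv ℝ b (t, y) (1, a (t, y))) x := by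
  have hb₁ : DifferentiableAt ℝ b (t, x) := hb.differentiableAt two_ne_zero
  have hb₂ : DifferentiableAt ℝ (fderiv ℝ b) (t, x) := differentiableAt_fderiv_of_contDiffAt hb
  rw [(hasFDerivAt_curl2_slice hb).fderiv, Bform_eq_curlForm_comp (by fun_prop) (by fun_prop),
    curl2_eq_curlForm (by fun_prop),
    fderiv_fderiv_apply_slice ha hb₁ hb₂ (hb.isSymmSndFDerivAt (by simp)), map_add]
  simp only [comp_apply, precomp_apply]

theorem curl2_transport {Ω : Set (ℝ × (ℝ × ℝ))} (hΩ : IsOpen Ω) {p ϖ : ℝ × (ℝ × ℝ) → ℝ}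
    (ha : DifferentiableOn ℝ a Ω) (hb : ContDiffOn ℝ 2 b Ω)
    (hp : ∀ t x, (t, x) ∈ Ω → DifferentiableAt ℝ (fun y => p (t, y)) x)
    (hab : ∀ t x, (t, x) ∈ Ω → fderiv ℝ b (t, x) (1, a (t, x)) +
      (pd1 (fun y => p (t, y)) x, pd2 (fun y => p (t, y)) x) = 0)
    (hϖ : ∀ t x, (t, x) ∈ Ω → ϖ (t, x) = curl2 (fun y => b (t, y)) x) (hz : (t, x) ∈ Ω) :
    deriv (fun t' => ϖ (t', x)) t + fderiv ℝ (fun y => ϖ (t, y)) x (a (t, x)) +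
      Bform (fun y => a (t, y)) (fun y => b (t, y)) x = 0 := by
  have hΩz : Ω ∈ 𝓝 (t, x) := hΩ.mem_nhds hz
  have haz : DifferentiableAt ℝ a (t, x) := ha.differentiableAt hΩz
  have hbz : ContDiffAt ℝ 2 b (t, x) := hb.contDiffAt hΩz
  have hΩx : ∀ᶠ y in 𝓝 x, (t, y) ∈ Ω := (Continuous.prodMk_right t).continuousAt hΩz
  have hϖz : ϖ =ᶠ[𝓝 (t, x)] fun z => curl2 (fun y => b (z.1, y)) z.2 := by
    filter_upwards [hΩz] with z using hϖ z.1 z.2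
  have hgrad : (fun y => fderiv ℝ b (t, y) (1, a (t, y))) =ᶠ[𝓝 x]
      fun y => -(pd1 (fun y' => p (t, y')) y, pd2 (fun y' => p (t, y')) y) :=
    hΩx.mono fun y hy => eq_neg_of_add_eq_zero_left (hab t y hy)
  have hDbz : DifferentiableAt ℝ (fderiv ℝ b) (t, x) := differentiableAt_fderiv_of_contDiffAt hbz
  have hϖ_diff : DifferentiableAt ℝ ϖ (t, x) :=
    ((hasFDerivAt_curl2_slice hbz).congr_of_eventuallyEq hϖz).differentiableAt
  have hgrad_diff :
      DifferentiableAt ℝ (fun y => (pd1 (fun y' => p (t, y')) y, pd2 (fun y' => p (t, y')) y)) x :=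
    differentiableAt_fun_neg_iff.mp <|
      DifferentiableAt.congr_of_eventuallyEq (by fun_prop) hgrad.symm
  calc
    _ = fderiv ℝ (fun z : ℝ × (ℝ × ℝ) => curl2 (fun y => b (z.1, y)) z.2) (t, x) (1, a (t, x)) +
          Bform (fun y => a (t, y)) (fun y => b (t, y)) x := by
      rw [deriv_slice_left_add_fderiv_slice_right hϖ_diff, hϖz.fderiv_eq]
    _ = curl2 (fun y => fderiv ℝ b (t, y) (1, a (t, y))) x := fderiv_curl2_slice_add_Bform haz hbz
    _ = -curl2 (fun y => (pd1 (fun y' => p (t, y')) y, pd2 (fun y' => p (t, y')) y)) x := by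
      rw [curl2_congr hgrad, curl2_neg]
    _ = 0 := by rw [curl2_gradient (hΩx.mono (hp t)) hgrad_diff, neg_zero]

end Transport

theorem transport_of_vorticity_current_general
    {Ω : Set (ℝ × (ℝ × ℝ))} (hΩ : IsOpen Ω)
    {v h : ℝ × (ℝ × ℝ) → ℝ × ℝ} {p : ℝ × (ℝ × ℝ) → ℝ}
    (hv : ContDiffOn ℝ 2 v Ω) (hh : ContDiffOn ℝ 2 h Ω)
    (hp : ∀ t x, (t, x) ∈ Ω → DifferentiableAt ℝ (fun y => p (t, y)) x)
    (hmomentum : ∀ t x, (t, x) ∈ Ω →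
      deriv (fun t' => v (t', x)) t
        + fderiv ℝ (fun y => v (t, y)) x (v (t, x))
        + (pd1 (fun y => p (t, y)) x, pd2 (fun y => p (t, y)) x)
        = fderiv ℝ (fun y => h (t, y)) x (h (t, x)))
    (hinduction : ∀ t x, (t, x) ∈ Ω →
      deriv (fun t' => h (t', x)) t + fderiv ℝ (fun y => h (t, y)) x (v (t, x))
        = fderiv ℝ (fun y => v (t, y)) x (h (t, x)))
    {ϖp ϖm : ℝ × (ℝ × ℝ) → ℝ}
    (hϖp : ∀ t x, (t, x) ∈ Ω → ϖp (t, x) = curl2 (fun y => v (t, y) + h (t, y)) x)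
    (hϖm : ∀ t x, (t, x) ∈ Ω → ϖm (t, x) = curl2 (fun y => v (t, y) - h (t, y)) x) :
    (∀ t x, (t, x) ∈ Ω →
      deriv (fun t' => ϖm (t', x)) t
        + fderiv ℝ (fun y => ϖm (t, y)) x (v (t, x) + h (t, x))
        + Bform (fun y => v (t, y) + h (t, y)) (fun y => v (t, y) - h (t, y)) x = 0) ∧
    (∀ t x, (t, x) ∈ Ω →
      deriv (fun t' => ϖp (t', x)) t
        + fderiv ℝ (fun y => ϖp (t, y)) x (v (t, x) - h (t, x))
        + Bform (fun y => v (t, y) - h (t, y)) (fun y => v (t, y) + h (t, y)) x = 0) := by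
  have hadd : ContDiffOn ℝ 2 (fun z => v z + h z) Ω := hv.add hh
  have hsub : ContDiffOn ℝ 2 (fun z => v z - h z) Ω := hv.sub hh
  have elsasser (t x) (hz : (t, x) ∈ Ω) :=
    elsasser_equations
      ((hv.contDiffAt (hΩ.mem_nhds hz)).differentiableAt two_ne_zero)
      ((hh.contDiffAt (hΩ.mem_nhds hz)).differentiableAt two_ne_zero)
      (hmomentum t x hz) (hinduction t x hz)
  exact ⟨fun t x => curl2_transport hΩ (hadd.differentiableOn two_ne_zero) hsub hp
      (fun t x hz => (elsasser t x hz).1) hϖm,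
    fun t x => curl2_transport hΩ (hsub.differentiableOn two_ne_zero) hadd hp
      (fun t x hz => (elsasser t x hz).2) hϖp⟩

/-- Transport equations for the vorticity–current combinations `ϖ± = Curl(v ± h)` along the
Elsässer characteristics: for `C²` solutions of ideal incompressible 2D MHD on `I × U`,
`∂_t ϖ₋ + ((v+h)·∇)ϖ₋ + 𝓑(∂(v+h), ∂(v−h)) = 0` and
`∂_t ϖ₊ + ((v−h)·∇)ϖ₊ + 𝓑(∂(v−h), ∂(v+h)) = 0`. -/
theorem transport_of_vorticity_current
    (I : Set ℝ) (hIopen : IsOpen I) (hIinterval : I.OrdConnected)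
    (U : Set (ℝ × ℝ)) (hU : IsOpen U)
    (v h : ℝ × (ℝ × ℝ) → ℝ × ℝ) (p : ℝ × (ℝ × ℝ) → ℝ)
    (hv : ContDiffOn ℝ 2 v (I ×ˢ U))
    (hh : ContDiffOn ℝ 2 h (I ×ˢ U))
    (hp : ContDiffOn ℝ 2 p (I ×ˢ U))
    (hMHD1 : ∀ t ∈ I, ∀ x ∈ U,
      deriv (fun t' => v (t', x)) t
        + fderiv ℝ (fun y => v (t, y)) x (v (t, x))
        + (pd1 (fun y => p (t, y)) x, pd2 (fun y => p (t, y)) x)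
        = fderiv ℝ (fun y => h (t, y)) x (h (t, x)))
    (hMHD2 : ∀ t ∈ I, ∀ x ∈ U,
      deriv (fun t' => h (t', x)) t + fderiv ℝ (fun y => h (t, y)) x (v (t, x))
        = fderiv ℝ (fun y => v (t, y)) x (h (t, x)))
    (ϖp ϖm : ℝ × (ℝ × ℝ) → ℝ)
    (hϖp : ∀ t ∈ I, ∀ x ∈ U, ϖp (t, x) = curl2 (fun y => v (t, y) + h (t, y)) x)
    (hϖm : ∀ t ∈ I, ∀ x ∈ U, ϖm (t, x) = curl2 (fun y => v (t, y) - h (t, y)) x) :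
    (∀ t ∈ I, ∀ x ∈ U,
      deriv (fun t' => ϖm (t', x)) t
        + fderiv ℝ (fun y => ϖm (t, y)) x (v (t, x) + h (t, x))
        + Bform (fun y => v (t, y) + h (t, y)) (fun y => v (t, y) - h (t, y)) x = 0) ∧
    (∀ t ∈ I, ∀ x ∈ U,
      deriv (fun t' => ϖp (t', x)) t
        + fderiv ℝ (fun y => ϖp (t, y)) x (v (t, x) - h (t, x))
        + Bform (fun y => v (t, y) - h (t, y)) (fun y => v (t, y) + h (t, y)) x = 0) := by
  have transport := transport_of_vorticity_current_general (hIopen.prod hU) hv hh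
    (fun t x hz => differentiableAt_slice_right
      ((hp.differentiableOn two_ne_zero).differentiableAt ((hIopen.prod hU).mem_nhds hz)))
    (fun t x hz => hMHD1 t hz.1 x hz.2) (fun t x hz => hMHD2 t hz.1 x hz.2)
    (fun t x hz => hϖp t hz.1 x hz.2) (fun t x hz => hϖm t hz.1 x hz.2)
  exact ⟨fun t ht x hx => transport.1 t x ⟨ht, hx⟩, fun t ht x hx => transport.2 t x ⟨ht, hx⟩⟩
end

section
/- Let γ : ℝ → ℝ² be a C² regular plane curve with speed σ(s) := ‖γ'(s)‖ > 0, unit tangent τ := σ⁻¹γ', unit normal n := (τ², −τ¹), and signed curvature κ := (σ⁻¹n')·τ. Let H : ℝ² → ℝ² be a C¹ vector field that is curl-free, i.e. ∂₁H² − ∂₂H¹ = 0 on ℝ², and tangential along the curve, i.e. H(γ(s))·n(s) = 0 for all s. Then for every s: n(s) · ∇(½‖H‖²)(γ(s)) = −κ(s)·‖H(γ(s))‖², where ∇(½‖H‖²) denotes the gradient of the scalar function x ↦ ½‖H(x)‖². Equivalently, since Curl H = 0 gives ∇(½|H|²) = (H·∇)H, one has n·((H·∇)H)(γ(s)) = −κ(s)|H(γ(s))|².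 -/
/-!
Write `H = m τ` on the curve. Differentiating `H · n = 0` along `γ` gives
`DH(γ') · n = -H · n'`; multiplying by `m / σ` turns this into
`(H · ∇)H · n = -m² (σ⁻¹ n') · τ = -κ |H|²`. Vanishing curl means that `DH` is symmetric, so
`n · ∇(½|H|²) = DH(n) · H = n · DH(H)` is the same number.
-/

open scoped Topology

section BilinearForm

variable {𝕜 E F : Type*} [NontriviallyNormedField 𝕜] [NormedAddCommGroup E] [NormedSpace 𝕜 E]
  [NormedAddCommGroup F] [NormedSpace 𝕜 F] (B : F →L[𝕜] F →L[𝕜] 𝕜)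

theorem fderiv_bilin_self_div_two_apply [NeZero (2 : 𝕜)] (hB : ∀ v w, B v w = B w v)
    {H : E → F} {x : E} (hH : DifferentiableAt 𝕜 H x) (v : E) :
    fderiv 𝕜 (fun y => B (H y) (H y) / 2) x v = B (fderiv 𝕜 H x v) (H x) := by
  have hBH : fderiv 𝕜 (fun y => B (H y) (H y)) x v =
      B (H x) (fderiv 𝕜 H x v) + B (fderiv 𝕜 H x v) (H x) := by
    rw [B.fderiv_of_bilinear hH hH]
    rfl
  have hdiff : DifferentiableAt 𝕜 (fun y => B (H y) (H y)) x := by fun_prop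
  simp only [div_eq_inv_mul, fderiv_const_mul hdiff, smul_apply, hBH, smul_eq_mul, hB (H x)]
  rw [← two_mul, inv_mul_cancel_left₀ two_ne_zero]

theorem bilin_deriv_left_eq_neg_of_eventually_eq_zero {u n : 𝕜 → F} {s : 𝕜}
    (hu : DifferentiableAt 𝕜 u s) (hn : DifferentiableAt 𝕜 n s)
    (hzero : ∀ᶠ t in 𝓝 s, B (u t) (n t) = 0) :
    B (deriv u s) (n s) = -B (u s) (deriv n s) := by
  have hderiv : HasDerivAt (fun t => B (u t) (n t))
      (B (u s) (deriv n s) + B (deriv u s) (n s)) s :=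
    B.hasDerivAt_of_bilinear (fun _ => hu.hasDerivAt) (fun _ => hn.hasDerivAt)
  have hsum : B (u s) (deriv n s) + B (deriv u s) (n s) = 0 :=
    hderiv.unique ((hasDerivAt_const s (0 : 𝕜)).congr_of_eventuallyEq hzero)
  exact eq_neg_of_add_eq_zero_right hsum

theorem bilin_fderiv_self_eq_neg_of_eq_smul_deriv {H : F → F} {γ n : 𝕜 → F} {s c : 𝕜}
    (hH : DifferentiableAt 𝕜 H (γ s)) (hγ : DifferentiableAt 𝕜 γ s)
    (hn : DifferentiableAt 𝕜 n s) (hzero : ∀ᶠ t in 𝓝 s, B (H (γ t)) (n t) = 0)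
    (hc : H (γ s) = c • deriv γ s) :
    B (fderiv 𝕜 H (γ s) (H (γ s))) (n s) = -(c * B (H (γ s)) (deriv n s)) := by
  calc B (fderiv 𝕜 H (γ s) (H (γ s))) (n s)
      = c * B (fderiv 𝕜 H (γ s) (deriv γ s)) (n s) := by
        conv_lhs => rw [hc]
        simp only [map_smul, smul_apply, smul_eq_mul]
    _ = c * B (deriv (H ∘ γ) s) (n s) := by rw [fderiv_comp_deriv s hH hγ]
    _ = -(c * B (H (γ s)) (deriv n s)) := by
        rw [bilin_deriv_left_eq_neg_of_eventually_eq_zero B (hH.comp s hγ) hn hzero, mul_neg,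
          Function.comp_apply]

end BilinearForm

section Plane

/-- The Euclidean inner product of the plane, as a continuous bilinear form on `ℝ × ℝ` (whose
Mathlib norm is the sup norm, so that it carries no `inner`). -/
noncomputable def planeDot : ℝ × ℝ →L[ℝ] ℝ × ℝ →L[ℝ] ℝ :=
  (ContinuousLinearMap.mul ℝ ℝ).bilinearComp (.fst ℝ ℝ ℝ) (.fst ℝ ℝ ℝ) +
    (ContinuousLinearMap.mul ℝ ℝ).bilinearComp (.snd ℝ ℝ ℝ) (.snd ℝ ℝ ℝ)

theorem planeDot_apply (v w : ℝ × ℝ) : planeDot v w = v.1 * w.1 + v.2 * w.2 := rfl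

theorem planeDot_self (v : ℝ × ℝ) : planeDot v v = v.1 ^ 2 + v.2 ^ 2 := by
  rw [planeDot_apply, sq, sq]

theorem planeDot_comm (v w : ℝ × ℝ) : planeDot v w = planeDot w v := by
  simp only [planeDot_apply, mul_comm]

theorem eq_planeDot_smul_of_planeDot_rotate_eq_zero {h t : ℝ × ℝ} (ht : planeDot t t = 1)
    (hzero : planeDot h (t.2, -t.1) = 0) : h = planeDot h t • t := by
  simp only [planeDot_apply] at ht hzero ⊢
  ext
  · simp only [Prod.smul_fst, smul_eq_mul]
    linear_combination (-h.1) * ht + t.2 * hzero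
  · simp only [Prod.smul_snd, smul_eq_mul]
    linear_combination (-h.2) * ht - t.1 * hzero

theorem planeDot_map_left_eq_map_right {L : ℝ × ℝ →ₗ[ℝ] ℝ × ℝ}
    (hL : (L (1, 0)).2 = (L (0, 1)).1) (v w : ℝ × ℝ) :
    planeDot (L v) w = planeDot v (L w) := by
  have hcoord (u : ℝ × ℝ) : L u = u.1 • L (1, 0) + u.2 • L (0, 1) := by
    simp only [← map_smul, ← map_add, Prod.smul_mk, Prod.mk_add_mk, smul_eq_mul, mul_one,
      mul_zero, add_zero, zero_add]
  rw [hcoord v, hcoord w]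
  simp only [planeDot_apply, Prod.fst_add, Prod.snd_add, Prod.smul_fst, Prod.smul_snd,
    smul_eq_mul]
  linear_combination (v.1 * w.2 - v.2 * w.1) * hL

/-- The scalar curl `∂₁H² - ∂₂H¹` of a planar vector field; only meaningful where `H` is
differentiable. -/
noncomputable def planeCurl (H : ℝ × ℝ → ℝ × ℝ) (x : ℝ × ℝ) : ℝ :=
  fderiv ℝ (fun y => (H y).2) x (1, 0) - fderiv ℝ (fun y => (H y).1) x (0, 1)

theorem planeDot_fderiv_left_eq_right_of_planeCurl_eq_zero {H : ℝ × ℝ → ℝ × ℝ} {x : ℝ × ℝ}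
    (hH : DifferentiableAt ℝ H x) (hcurl : planeCurl H x = 0) (v w : ℝ × ℝ) :
    planeDot (fderiv ℝ H x v) w = planeDot v (fderiv ℝ H x w) := by
  refine planeDot_map_left_eq_map_right (L := (fderiv ℝ H x : ℝ × ℝ →ₗ[ℝ] ℝ × ℝ)) ?_ v w
  rw [planeCurl, fderiv.fst hH, fderiv.snd hH] at hcurl
  exact sub_eq_zero.mp hcurl

end Plane

section PlaneCurve

/-- The Euclidean speed `σ = ‖γ'‖` of a plane curve. -/
noncomputable def curveSpeed (γ : ℝ → ℝ × ℝ) (s : ℝ) : ℝ :=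
  √(planeDot (deriv γ s) (deriv γ s))

/-- The unit tangent `τ = σ⁻¹γ'` of a plane curve; it is `0` where the speed vanishes. -/
noncomputable def unitTangent (γ : ℝ → ℝ × ℝ) (s : ℝ) : ℝ × ℝ :=
  (curveSpeed γ s)⁻¹ • deriv γ s

/-- The unit normal `n = (τ², -τ¹)` of a plane curve, oriented so that `τ` is `n` rotated
counterclockwise by `π/2`. -/
noncomputable def unitNormal (γ : ℝ → ℝ × ℝ) (s : ℝ) : ℝ × ℝ :=
  ((unitTangent γ s).2, -(unitTangent γ s).1)

/-- The signed curvature `κ = (σ⁻¹n')·τ` of a plane curve, with respect to `unitNormal`. -/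
noncomputable def signedCurvature (γ : ℝ → ℝ × ℝ) (s : ℝ) : ℝ :=
  planeDot ((curveSpeed γ s)⁻¹ • deriv (unitNormal γ) s) (unitTangent γ s)

variable {γ : ℝ → ℝ × ℝ} {s : ℝ}

theorem deriv_ne_zero_of_curveSpeed_pos (hσ : 0 < curveSpeed γ s) : deriv γ s ≠ 0 := by
  intro hzero
  simp only [curveSpeed, hzero, map_zero, Real.sqrt_zero, lt_self_iff_false] at hσ

theorem planeDot_unitTangent_self (hσ : 0 < curveSpeed γ s) :
    planeDot (unitTangent γ s) (unitTangent γ s) = 1 := by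
  have hsq : planeDot (deriv γ s) (deriv γ s) = curveSpeed γ s ^ 2 :=
    (Real.sq_sqrt (Real.sqrt_pos.mp hσ).le).symm
  simp only [unitTangent, map_smul, smul_apply, smul_eq_mul, hsq]
  field_simp

theorem differentiableAt_unitTangent (hγ : DifferentiableAt ℝ (deriv γ) s)
    (hσ : 0 < curveSpeed γ s) : DifferentiableAt ℝ (unitTangent γ) s := by
  have hspeed : DifferentiableAt ℝ (curveSpeed γ) s :=
    DifferentiableAt.sqrt (by fun_prop) (Real.sqrt_pos.mp hσ).ne'
  exact (hspeed.inv hσ.ne').smul hγ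

theorem differentiableAt_unitNormal (hγ : DifferentiableAt ℝ (deriv γ) s)
    (hσ : 0 < curveSpeed γ s) : DifferentiableAt ℝ (unitNormal γ) s :=
  have hτ := differentiableAt_unitTangent hγ hσ
  hτ.snd.prodMk hτ.fst.neg

variable {H : ℝ × ℝ → ℝ × ℝ}

theorem planeDot_fderiv_self_unitNormal (hγ : DifferentiableAt ℝ (deriv γ) s)
    (hσ : 0 < curveSpeed γ s) (hH : DifferentiableAt ℝ H (γ s))
    (htang : ∀ᶠ t in 𝓝 s, planeDot (H (γ t)) (unitNormal γ t) = 0) :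
    planeDot (fderiv ℝ H (γ s) (H (γ s))) (unitNormal γ s) =
      -signedCurvature γ s * planeDot (H (γ s)) (H (γ s)) := by
  have hτ := planeDot_unitTangent_self hσ
  obtain ⟨m, hm⟩ : ∃ m : ℝ, H (γ s) = m • unitTangent γ s :=
    ⟨_, eq_planeDot_smul_of_planeDot_rotate_eq_zero hτ htang.self_of_nhds⟩
  have hparallel : H (γ s) = (m * (curveSpeed γ s)⁻¹) • deriv γ s := by
    rw [hm, unitTangent, smul_smul]
  have hγ' : DifferentiableAt ℝ γ s :=
    differentiableAt_of_deriv_ne_zero (deriv_ne_zero_of_curveSpeed_pos hσ)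
  rw [bilin_fderiv_self_eq_neg_of_eq_smul_deriv planeDot hH hγ'
    (differentiableAt_unitNormal hγ hσ) htang hparallel, hm, signedCurvature]
  simp only [map_smul, smul_apply, smul_eq_mul, hτ, planeDot_comm (unitTangent γ s)]
  ring

theorem normal_derivative_magnetic_pressure_general (hγ : DifferentiableAt ℝ (deriv γ) s)
    (hσ : 0 < curveSpeed γ s) (hH : DifferentiableAt ℝ H (γ s)) (hcurl : planeCurl H (γ s) = 0)
    (htang : ∀ᶠ t in 𝓝 s, planeDot (H (γ t)) (unitNormal γ t) = 0) :
    fderiv ℝ (fun y => planeDot (H y) (H y) / 2) (γ s) (unitNormal γ s) =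
        -signedCurvature γ s * planeDot (H (γ s)) (H (γ s)) ∧
      planeDot (fderiv ℝ H (γ s) (H (γ s))) (unitNormal γ s) =
        -signedCurvature γ s * planeDot (H (γ s)) (H (γ s)) := by
  have hadvection := planeDot_fderiv_self_unitNormal hγ hσ hH htang
  refine ⟨?_, hadvection⟩
  rw [fderiv_bilin_self_div_two_apply planeDot planeDot_comm hH,
    planeDot_fderiv_left_eq_right_of_planeCurl_eq_zero hH hcurl, planeDot_comm, hadvection]

end PlaneCurve

/-- Normal derivative of the magnetic pressure on an interface: if `H : ℝ² → ℝ²` is a `C¹`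
curl-free vector field which is tangential along a `C²` regular plane curve `γ` (with speed
`σ = ‖γ'‖`, unit tangent `τ = σ⁻¹γ'`, unit normal `n = (τ², −τ¹)`, and signed curvature
`κ = (σ⁻¹n')·τ`), then along the curve `n·∇(½|H|²) = −κ|H|²`, and equivalently
`n·((H·∇)H) = −κ|H|²`. -/
theorem normal_derivative_magnetic_pressure (γ : ℝ → ℝ × ℝ) (hγ : ContDiff ℝ 2 γ)
    (σ : ℝ → ℝ)
    (hσ : ∀ s, σ s = Real.sqrt ((deriv γ s).1 ^ 2 + (deriv γ s).2 ^ 2))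
    (hσpos : ∀ s, 0 < σ s)
    (τ n : ℝ → ℝ × ℝ) (κ : ℝ → ℝ)
    (hτ : ∀ s, τ s = (σ s)⁻¹ • deriv γ s)
    (hn : ∀ s, n s = ((τ s).2, -(τ s).1))
    (hκ : ∀ s, κ s = ((σ s)⁻¹ • deriv n s).1 * (τ s).1 + ((σ s)⁻¹ • deriv n s).2 * (τ s).2)
    (H : ℝ × ℝ → ℝ × ℝ) (hH : ContDiff ℝ 1 H)
    (hcurl : ∀ x : ℝ × ℝ,
      fderiv ℝ (fun y => (H y).2) x ((1 : ℝ), (0 : ℝ))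
        - fderiv ℝ (fun y => (H y).1) x ((0 : ℝ), (1 : ℝ)) = 0)
    (htang : ∀ s, (H (γ s)).1 * (n s).1 + (H (γ s)).2 * (n s).2 = 0) :
    ∀ s,
      fderiv ℝ (fun y => ((H y).1 ^ 2 + (H y).2 ^ 2) / 2) (γ s) (n s)
          = -(κ s) * ((H (γ s)).1 ^ 2 + (H (γ s)).2 ^ 2) ∧
      (fderiv ℝ H (γ s) (H (γ s))).1 * (n s).1 + (fderiv ℝ H (γ s) (H (γ s))).2 * (n s).2
          = -(κ s) * ((H (γ s)).1 ^ 2 + (H (γ s)).2 ^ 2) := by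
  obtain rfl : σ = curveSpeed γ := funext fun s => by rw [hσ, curveSpeed, planeDot_self]
  obtain rfl : τ = unitTangent γ := funext hτ
  obtain rfl : n = unitNormal γ := funext hn
  obtain rfl : κ = signedCurvature γ := funext hκ
  intro s
  simpa only [planeDot_self, planeDot_apply] using
    normal_derivative_magnetic_pressure_general (hγ.differentiable_deriv_two s) (hσpos s)
      (hH.differentiable one_ne_zero (γ s)) (hcurl (γ s)) (.of_forall htang)
end
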